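/- Let A = (A_1,…,A_n) be a nonnegative vector in ℝ^n, D = n + A_1 + ⋯ + A_n, 1 ≤ p < D, and p_* = Dp/(D−p). Then for every continuously differentiable function f : ℝ^n → ℝ with compact support, (∫_{ℝ^n_A} |f|^{p_*} x^A dx)^{1/p_*} ≤ C_{p,n,A} (∫_{ℝ^n_A} |∇f|^p x^A dx)^{1/p}, where C_{1,n,A} = D^{−1} ( 2^k Γ(1+D/2) / (Γ((A_1+1)/2)⋯Γ((A_n+1)/2)) )^{1/D} when p = 1, and C_{p,n,A} = C_{1,n,A} · D^{1−1/p−1/D} · ((p−1)/(D−p))^{1/p'} · ( p' Γ(D) / (Γ(D/p) Γ(D/p')) )^{1/D} when 1 < p < D, with p' = p/(p−1). -/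

import Mathlib

open MeasureTheory Real Filter

noncomputable section

/-- The positivity region `ℝ^n_A = {x : x_i > 0 whenever A_i > 0}`. -/
def monSet {ι : Type*} [Fintype ι] (A : ι → ℝ) : Set (EuclideanSpace ℝ ι) :=
  {x | ∀ i, 0 < A i → 0 < x i}

/-- The monomial weight `x^A = ∏ |x_i|^{A_i}`. -/
def monWeight {ι : Type*} [Fintype ι] (A : ι → ℝ) (x : EuclideanSpace ℝ ι) : ℝ :=
  ∏ i, |x i| ^ A i

/-- The homogeneous dimension `D = n + A_1 + ⋯ + A_n`. -/
def monDim {ι : Type*} [Fintype ι] (A : ι → ℝ) : ℝ :=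
  (Fintype.card ι : ℝ) + ∑ i, A i

/-- `k = #{i : A_i > 0}`. -/
def monK {ι : Type*} [Fintype ι] (A : ι → ℝ) : ℕ :=
  Nat.card {i : ι // 0 < A i}

/-- `Π(A) = [ (∏ Γ((A_i+1)/2)) / 2^k ]^{2/D}`. -/
def monPi {ι : Type*} [Fintype ι] (A : ι → ℝ) : ℝ :=
  ((∏ i, Gamma ((A i + 1) / 2)) / 2 ^ monK A) ^ (2 / monDim A)

/-- `C_{1,n,A}`, the sharp constant for `p = 1`. -/
def monC1 {ι : Type*} [Fintype ι] (A : ι → ℝ) : ℝ :=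
  (monDim A)⁻¹ *
    ((2 ^ monK A * Gamma (1 + monDim A / 2)) / ∏ i, Gamma ((A i + 1) / 2)) ^ (1 / monDim A)

/-- `C_{p,n,A}`, the sharp constant for `1 ≤ p < D` (piecewise: `p = 1` and `1 < p < D`). -/
def monCp {ι : Type*} [Fintype ι] (A : ι → ℝ) (p : ℝ) : ℝ :=
  if p = 1 then monC1 A
  else
    monC1 A * monDim A ^ (1 - 1 / p - 1 / monDim A) *
      ((p - 1) / (monDim A - p)) ^ (1 / (p / (p - 1))) *
      (p / (p - 1) * Gamma (monDim A) /
        (Gamma (monDim A / p) * Gamma (monDim A / (p / (p - 1))))) ^ (1 / monDim A)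

section

open Set Topology

section Transport

variable {P : Type} [TopologicalSpace P]

lemma strictMonoOn_primitive {φ w : ℝ → ℝ} {a b : ℝ} (hφ : Continuous φ) (hφ0 : ∀ t, 0 < φ t)
    (hw : Continuous w) (hwpos : ∀ t ∈ Ioo a b, 0 < w t) :
    StrictMonoOn (fun x => ∫ t in a..x, φ t * w t) (Icc a b) := by
  intro x hx y hy hxy
  have hc : Continuous fun t => φ t * w t := hφ.mul hw
  have h1 : 0 < ∫ t in x..y, φ t * w t :=
    intervalIntegral.intervalIntegral_pos_of_pos_on (hc.intervalIntegrable _ _)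
      (fun t ht => mul_pos (hφ0 t) (hwpos t ⟨hx.1.trans_lt ht.1, ht.2.trans_le hy.2⟩)) hxy
  have h2 := intervalIntegral.integral_add_adjacent_intervals
    (hc.intervalIntegrable (μ := volume) a x) (hc.intervalIntegrable x y)
  simp only
  linarith

lemma exists_monotone_transport {φ ψ : P → ℝ → ℝ} {w : ℝ → ℝ} {a b : ℝ} (hab : a < b)
    (hφ : Continuous φ.uncurry) (hψ : Continuous ψ.uncurry)
    (hφ0 : ∀ p t, 0 < φ p t) (hψ0 : ∀ p t, 0 < ψ p t)
    (hw : Continuous w) (hwpos : ∀ t ∈ Ioo a b, 0 < w t)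
    (hmass : ∀ p, ∫ t in a..b, φ p t * w t = ∫ t in a..b, ψ p t * w t) :
    ∃ T : P → ℝ → ℝ, Continuous T.uncurry ∧ (∀ p x, T p x ∈ Icc a b) ∧
      (∀ p, ∀ x ∈ Ioo a b, T p x ∈ Ioo a b) ∧
      (∀ p, ∀ x ∈ Ioo a b,
        HasDerivAt (T p) (φ p x * w x / (ψ p (T p x) * w (T p x))) x) ∧
      (∀ p, ∀ h : ℝ → ENNReal, ∫⁻ x in Ioo a b, ENNReal.ofReal (φ p x * w x) * h (T p x) =
        ∫⁻ y in Ioo a b, ENNReal.ofReal (ψ p y * w y) * h y) := by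
  set Φ : P → ℝ → ℝ := fun p x => ∫ t in a..x, φ p t * w t with hΦ
  set Ψ : P → ℝ → ℝ := fun p x => ∫ t in a..x, ψ p t * w t with hΨ
  have hφp (p) : Continuous (φ p) := hφ.comp (Continuous.prodMk_right p)
  have hψp (p) : Continuous (ψ p) := hψ.comp (Continuous.prodMk_right p)
  have hΦm (p) : StrictMonoOn (Φ p) (Icc a b) := strictMonoOn_primitive (hφp p) (hφ0 p) hw hwpos
  have hΨm (p) : StrictMonoOn (Ψ p) (Icc a b) := strictMonoOn_primitive (hψp p) (hψ0 p) hw hwpos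
  have hΦc : Continuous Φ.uncurry := by
    have : Continuous (fun q : P × ℝ => ∫ t in a..q.2, φ q.1 t * w t) := by
      refine intervalIntegral.continuous_parametric_intervalIntegral_of_continuous
        (f := fun (q : P × ℝ) t => φ q.1 t * w t) ?_ continuous_snd
      have : Continuous fun z : (P × ℝ) × ℝ => φ.uncurry (z.1.1, z.2) := hφ.comp (by fun_prop)
      exact this.mul (hw.comp continuous_snd)
    exact this
  have hΨc : Continuous Ψ.uncurry := by
    have : Continuous (fun q : P × ℝ => ∫ t in a..q.2, ψ q.1 t * w t) := by
      refine intervalIntegral.continuous_parametric_intervalIntegral_of_continuous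
        (f := fun (q : P × ℝ) t => ψ q.1 t * w t) ?_ continuous_snd
      have : Continuous fun z : (P × ℝ) × ℝ => ψ.uncurry (z.1.1, z.2) := hψ.comp (by fun_prop)
      exact this.mul (hw.comp continuous_snd)
    exact this
  have hΦp (p) : Continuous (Φ p) := hΦc.comp (Continuous.prodMk_right p)
  have hΨp (p) : Continuous (Ψ p) := hΨc.comp (Continuous.prodMk_right p)
  have haI : a ∈ Icc a b := left_mem_Icc.2 hab.le
  have hbI : b ∈ Icc a b := right_mem_Icc.2 hab.le
  have hΦa (p) : Φ p a = 0 := by simp [hΦ]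
  have hΨa (p) : Ψ p a = 0 := by simp [hΨ]
  have hb (p) : Φ p b = Ψ p b := hmass p
  set c : ℝ → ℝ := fun x => projIcc a b hab.le x with hc
  have hcc : Continuous c := continuous_subtype_val.comp continuous_projIcc
  have hcI (x) : c x ∈ Icc a b := (projIcc a b hab.le x).2
  have hcx (x) (hx : x ∈ Icc a b) : c x = x := by simp [hc, projIcc_of_mem hab.le hx]
  have hex (p x) : ∃ y ∈ Icc a b, Ψ p y = Φ p (c x) := by
    apply intermediate_value_Icc hab.le (hΨp p).continuousOn
    rw [hΨa, ← hb, ← hΦa p]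
    exact ⟨(hΦm p).monotoneOn haI (hcI x) (hcI x).1, (hΦm p).monotoneOn (hcI x) hbI (hcI x).2⟩
  choose T hTI hT using hex
  have hTc : Continuous T.uncurry := by
    rw [continuous_iff_continuousAt]
    rintro ⟨p₀, x₀⟩
    refine tendsto_order.2 ⟨fun l hl => ?_, fun l hl => ?_⟩
    · simp only [Function.uncurry] at hl
      rcases lt_or_ge l a with hla | hla
      · exact Eventually.of_forall fun q => hla.trans_le (hTI q.1 q.2).1
      have hlI : l ∈ Icc a b := ⟨hla, hl.le.trans (hTI p₀ x₀).2⟩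
      have h0 : Ψ p₀ l < Φ p₀ (c x₀) := by
        rw [← hT]; exact hΨm p₀ hlI (hTI p₀ x₀) hl
      have h1 : Continuous fun q : P × ℝ => Ψ q.1 l :=
        hΨc.comp (f := fun q : P × ℝ => (q.1, l)) (by fun_prop)
      have h2 : Continuous fun q : P × ℝ => Φ q.1 (c q.2) :=
        hΦc.comp (f := fun q : P × ℝ => (q.1, c q.2)) (by fun_prop)
      filter_upwards [h1.continuousAt.eventually_lt h2.continuousAt h0] with q hq
      rw [← hT] at hq
      by_contra hcon
      exact absurd ((hΨm q.1).monotoneOn (hTI q.1 q.2) hlI (not_lt.1 hcon)) (not_le.2 hq)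
    · simp only [Function.uncurry] at hl
      rcases lt_or_ge b l with hla | hla
      · exact Eventually.of_forall fun q => (hTI q.1 q.2).2.trans_lt hla
      have hlI : l ∈ Icc a b := ⟨(hTI p₀ x₀).1.trans hl.le, hla⟩
      have h0 : Φ p₀ (c x₀) < Ψ p₀ l := by
        rw [← hT]; exact hΨm p₀ (hTI p₀ x₀) hlI hl
      have h1 : Continuous fun q : P × ℝ => Ψ q.1 l :=
        hΨc.comp (f := fun q : P × ℝ => (q.1, l)) (by fun_prop)
      have h2 : Continuous fun q : P × ℝ => Φ q.1 (c q.2) :=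
        hΦc.comp (f := fun q : P × ℝ => (q.1, c q.2)) (by fun_prop)
      filter_upwards [h2.continuousAt.eventually_lt h1.continuousAt h0] with q hq
      rw [← hT] at hq
      by_contra hcon
      exact absurd ((hΨm q.1).monotoneOn hlI (hTI q.1 q.2) (not_lt.1 hcon)) (not_le.2 hq)
  have hTp (p) : Continuous (T p) := hTc.comp (Continuous.prodMk_right p)
  have hTx (p x) (hx : x ∈ Icc a b) : Ψ p (T p x) = Φ p x := by rw [hT, hcx x hx]
  have hTo (p) (x) (hx : x ∈ Ioo a b) : T p x ∈ Ioo a b := by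
    have hxI := Ioo_subset_Icc_self hx
    have h1 := hTx p x hxI
    refine ⟨(hTI p x).1.lt_of_ne fun h => ?_, (hTI p x).2.lt_of_ne fun h => ?_⟩
    · rw [← h, hΨa, ← hΦa p] at h1
      exact absurd h1 (hΦm p haI hxI hx.1).ne
    · rw [h, ← hb] at h1
      exact absurd h1.symm (hΦm p hxI hbI hx.2).ne
  have hder (p) (x) (hx : x ∈ Ioo a b) :
      HasDerivAt (T p) (φ p x * w x / (ψ p (T p x) * w (T p x))) x := by
    have hφw : Continuous fun t => φ p t * w t := (hφp p).mul hw
    have hψw : Continuous fun t => ψ p t * w t := (hψp p).mul hw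
    have h1 : HasStrictDerivAt (Φ p) (φ p x * w x) x :=
      intervalIntegral.integral_hasStrictDerivAt_right (hφw.intervalIntegrable _ _)
        (hφw.stronglyMeasurableAtFilter _ _) hφw.continuousAt
    have h2 : HasStrictDerivAt (Ψ p) (ψ p (T p x) * w (T p x)) (T p x) :=
      intervalIntegral.integral_hasStrictDerivAt_right (hψw.intervalIntegrable _ _)
        (hψw.stronglyMeasurableAtFilter _ _) hψw.continuousAt
    have hne : ψ p (T p x) * w (T p x) ≠ 0 := (mul_pos (hψ0 _ _) (hwpos _ (hTo p x hx))).ne'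
    have h3 := h2.to_localInverse hne
    rw [hTx p x (Ioo_subset_Icc_self hx)] at h3
    have h4 := h3.hasDerivAt.comp x h1.hasDerivAt
    rw [div_eq_inv_mul]
    refine h4.congr_of_eventuallyEq ?_
    have h5 : ∀ᶠ y in 𝓝 x, h2.localInverse _ _ _ hne (Ψ p (T p y)) = T p y :=
      (hTp p).continuousAt.eventually
        (h2.hasStrictFDerivAt_equiv hne).eventually_left_inverse
    filter_upwards [h5, Ioo_mem_nhds hx.1 hx.2] with y hy hyI
    rw [← hy, hTx p y (Ioo_subset_Icc_self hyI)]
    rfl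
  refine ⟨T, hTc, hTI, hTo, hder, fun p h => ?_⟩
  have himg : T p '' Ioo a b = Ioo a b := by
    apply Subset.antisymm
    · rintro _ ⟨x, hx, rfl⟩; exact hTo p x hx
    · intro y hy
      have hyI := Ioo_subset_Icc_self hy
      have : Ψ p y ∈ Ioo (Φ p a) (Φ p b) := by
        rw [hΦa, hb, ← hΨa p]
        exact ⟨hΨm p haI hyI hy.1, hΨm p hyI hbI hy.2⟩
      obtain ⟨x, hx, hxy⟩ := intermediate_value_Ioo hab.le (hΦp p).continuousOn this
      refine ⟨x, hx, (hΨm p).injOn (hTI p x) hyI ?_⟩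
      rw [hTx p x (Ioo_subset_Icc_self hx), hxy]
  have hinj : InjOn (T p) (Ioo a b) := fun x hx y hy hxy => by
    have hxI := Ioo_subset_Icc_self hx
    have hyI := Ioo_subset_Icc_self hy
    refine (hΦm p).injOn hxI hyI ?_
    rw [← hTx p x hxI, ← hTx p y hyI, hxy]
  have key := lintegral_image_eq_lintegral_abs_deriv_mul measurableSet_Ioo
    (fun x hx => (hder p x hx).hasDerivWithinAt) hinj
    (fun y => ENNReal.ofReal (ψ p y * w y) * h y)
  rw [himg] at key
  rw [key]
  refine setLIntegral_congr_fun measurableSet_Ioo fun x hx => ?_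
  have hpos : 0 < ψ p (T p x) * w (T p x) := mul_pos (hψ0 _ _) (hwpos _ (hTo p x hx))
  have hpos' : 0 < φ p x * w x := mul_pos (hφ0 _ _) (hwpos _ hx)
  rw [← mul_assoc, ← ENNReal.ofReal_mul (abs_nonneg _), abs_of_pos (div_pos hpos' hpos),
    div_mul_cancel₀ _ hpos.ne']

end Transport

section Pi

lemma lintegral_pi_insertNth {n : ℕ} (μ : Fin (n + 1) → Measure ℝ) [∀ i, SigmaFinite (μ i)]
    (i : Fin (n + 1)) {f : (Fin (n + 1) → ℝ) → ENNReal} (hf : Measurable f) :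
    ∫⁻ x, f x ∂Measure.pi μ =
      ∫⁻ t, ∫⁻ y, f (i.insertNth t y) ∂Measure.pi (fun j => μ (i.succAbove j)) ∂μ i := by
  have h := (measurePreserving_piFinSuccAbove μ i).symm
  rw [← h.lintegral_comp hf]
  exact lintegral_prod _ (hf.comp h.measurable).aemeasurable

lemma integral_pi_insertNth {n : ℕ} (μ : Fin (n + 1) → Measure ℝ) [∀ i, SigmaFinite (μ i)]
    (i : Fin (n + 1)) {f : (Fin (n + 1) → ℝ) → ℝ} (hf : Integrable f (Measure.pi μ)) :
    ∫ x, f x ∂Measure.pi μ =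
      ∫ t, ∫ y, f (i.insertNth t y) ∂Measure.pi (fun j => μ (i.succAbove j)) ∂μ i := by
  have h := (measurePreserving_piFinSuccAbove μ i).symm
  rw [← h.integral_comp' f, integral_prod]
  · rfl
  · exact (h.integrable_comp_emb (MeasurableEquiv.measurableEmbedding _)).2 hf

lemma lintegral_pi_cons {n : ℕ} (μ : Fin (n + 1) → Measure ℝ) [∀ i, SigmaFinite (μ i)]
    {f : (Fin (n + 1) → ℝ) → ENNReal} (hf : Measurable f) :
    ∫⁻ x, f x ∂Measure.pi μ =
      ∫⁻ t, ∫⁻ y, f (Fin.cons t y) ∂Measure.pi (fun j => μ j.succ) ∂μ 0 := by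
  simpa [Fin.zero_succAbove, Fin.insertNth_zero'] using lintegral_pi_insertNth μ 0 hf

lemma integral_pi_cons {n : ℕ} (μ : Fin (n + 1) → Measure ℝ) [∀ i, SigmaFinite (μ i)]
    {f : (Fin (n + 1) → ℝ) → ℝ} (hf : Integrable f (Measure.pi μ)) :
    ∫ x, f x ∂Measure.pi μ =
      ∫ t, ∫ y, f (Fin.cons t y) ∂Measure.pi (fun j => μ j.succ) ∂μ 0 := by
  simpa [Fin.zero_succAbove, Fin.insertNth_zero'] using integral_pi_insertNth μ 0 hf

/-- The measure with density `w` on the interval `(a, b)`. -/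
def intervalWeight (a b : ℝ) (w : ℝ → ℝ) : Measure ℝ :=
  (volume.restrict (Ioo a b)).withDensity fun t => ENNReal.ofReal (w t)

variable {n : ℕ} {a b : Fin n → ℝ} {w : Fin n → ℝ → ℝ}

lemma isFiniteMeasure_intervalWeight {a b : ℝ} {w : ℝ → ℝ} (hw : Continuous w) :
    IsFiniteMeasure (intervalWeight a b w) := by
  apply isFiniteMeasure_withDensity_ofReal
  exact ((hw.integrableOn_Icc (a := a) (b := b)).mono_set Ioo_subset_Icc_self).2

lemma lintegral_intervalWeight {a b : ℝ} {w : ℝ → ℝ} (hw : Continuous w) (f : ℝ → ENNReal) :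
    ∫⁻ t, f t ∂intervalWeight a b w = ∫⁻ t in Ioo a b, ENNReal.ofReal (w t) * f t := by
  rw [intervalWeight, lintegral_withDensity_eq_lintegral_mul_non_measurable₀ _ (by fun_prop)
    (Eventually.of_forall fun _ => ENNReal.ofReal_lt_top)]
  rfl

lemma integral_intervalWeight {a b : ℝ} {w : ℝ → ℝ} (hw : Continuous w)
    (hwpos : ∀ t ∈ Ioo a b, 0 < w t) (f : ℝ → ℝ) :
    ∫ t, f t ∂intervalWeight a b w = ∫ t in Ioo a b, w t * f t := by
  rw [intervalWeight, integral_withDensity_eq_integral_toReal_smul₀ (by fun_prop)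
    (Eventually.of_forall fun _ => ENNReal.ofReal_lt_top)]
  refine setIntegral_congr_fun measurableSet_Ioo fun t ht => ?_
  simp [ENNReal.toReal_ofReal (hwpos t ht).le]

lemma intervalWeight_ne_zero {a b : ℝ} {w : ℝ → ℝ} (hab : a < b) (hw : Continuous w)
    (hwpos : ∀ t ∈ Ioo a b, 0 < w t) : intervalWeight a b w univ ≠ 0 := by
  rw [← lintegral_one, lintegral_intervalWeight hw]
  simp only [mul_one]
  rw [← ofReal_integral_eq_lintegral_ofReal]
  · rw [← integral_Ioc_eq_integral_Ioo, ← intervalIntegral.integral_of_le hab.le]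
    simpa using intervalIntegral.intervalIntegral_pos_of_pos_on (hw.intervalIntegrable _ _)
      hwpos hab
  · exact (hw.integrableOn_Icc (a := a) (b := b)).mono_set Ioo_subset_Icc_self
  · exact (ae_restrict_mem measurableSet_Ioo).mono fun t ht => (hwpos t ht).le

lemma ae_mem_intervalWeight (a b : ℝ) (w : ℝ → ℝ) : ∀ᵐ t ∂intervalWeight a b w, t ∈ Ioo a b :=
  (withDensity_absolutelyContinuous _ _).ae_le (ae_restrict_mem measurableSet_Ioo)

lemma ae_mem_pi_intervalWeight (hw : ∀ i, Continuous (w i)) :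
    ∀ᵐ x ∂Measure.pi (fun i => intervalWeight (a i) (b i) (w i)), ∀ i, x i ∈ Ioo (a i) (b i) := by
  have := fun i => isFiniteMeasure_intervalWeight (a := a i) (b := b i) (hw i)
  rw [ae_all_iff]
  intro i
  exact (Measure.tendsto_eval_ae_ae (i := i)).eventually (ae_mem_intervalWeight (a i) (b i) (w i))

lemma restrict_pi_intervalWeight (hw : ∀ i, Continuous (w i)) :
    (Measure.pi (fun i => intervalWeight (a i) (b i) (w i))).restrict (Icc a b) =
      Measure.pi (fun i => intervalWeight (a i) (b i) (w i)) := by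
  rw [Measure.restrict_eq_self_of_ae_mem]
  exact (ae_mem_pi_intervalWeight hw).mono fun x hx => ⟨fun i => (hx i).1.le, fun i => (hx i).2.le⟩

lemma integrable_pi_intervalWeight (hw : ∀ i, Continuous (w i)) {f : (Fin n → ℝ) → ℝ}
    (hf : Continuous f) :
    Integrable f (Measure.pi (fun i => intervalWeight (a i) (b i) (w i))) := by
  have := fun i => isFiniteMeasure_intervalWeight (a := a i) (b := b i) (hw i)
  rw [← restrict_pi_intervalWeight hw]
  exact hf.continuousOn.integrableOn_compact isCompact_Icc

lemma integral_pos_pi_intervalWeight (hab : ∀ i, a i < b i) (hw : ∀ i, Continuous (w i))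
    (hwpos : ∀ i, ∀ t ∈ Ioo (a i) (b i), 0 < w i t) {f : (Fin n → ℝ) → ℝ}
    (hf : Continuous f) (hf0 : ∀ x, 0 < f x) :
    0 < ∫ x, f x ∂Measure.pi (fun i => intervalWeight (a i) (b i) (w i)) := by
  have := fun i => isFiniteMeasure_intervalWeight (a := a i) (b := b i) (hw i)
  rw [integral_pos_iff_support_of_nonneg (fun x => (hf0 x).le) (integrable_pi_intervalWeight hw hf),
    show Function.support f = univ from eq_univ_of_forall fun x => (hf0 x).ne', Measure.pi_univ]
  exact pos_iff_ne_zero.2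
    (Finset.prod_ne_zero_iff.2 fun i _ => intervalWeight_ne_zero (hab i) (hw i) (hwpos i))

lemma continuous_integral_pi_intervalWeight {P : Type} [TopologicalSpace P]
    [FirstCountableTopology P] [LocallyCompactSpace P] (hw : ∀ i, Continuous (w i))
    {f : P → (Fin n → ℝ) → ℝ} (hf : Continuous f.uncurry) :
    Continuous fun p => ∫ x, f p x ∂Measure.pi (fun i => intervalWeight (a i) (b i) (w i)) := by
  have := fun i => isFiniteMeasure_intervalWeight (a := a i) (b := b i) (hw i)
  rw [← restrict_pi_intervalWeight hw]
  exact continuous_parametric_integral_of_continuous hf isCompact_Icc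

end Pi

theorem exists_knothe_transport (n : ℕ) : ∀ {P : Type} [TopologicalSpace P]
    [SecondCountableTopology P] [LocallyCompactSpace P] [MeasurableSpace P] [BorelSpace P]
    {a b : Fin n → ℝ} {w : Fin n → ℝ → ℝ} (_ : ∀ i, a i < b i) (_ : ∀ i, Continuous (w i))
    (_ : ∀ i, ∀ t ∈ Ioo (a i) (b i), 0 < w i t) {F G : P → (Fin n → ℝ) → ℝ}
    (_ : Continuous F.uncurry) (_ : Continuous G.uncurry) (_ : ∀ p x, 0 < F p x)
    (_ : ∀ p x, 0 < G p x)
    (_ : ∀ p, ∫ x, F p x ∂Measure.pi (fun i => intervalWeight (a i) (b i) (w i)) =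
      ∫ x, G p x ∂Measure.pi (fun i => intervalWeight (a i) (b i) (w i))),
    ∃ T J : P → (Fin n → ℝ) → (Fin n → ℝ), Continuous T.uncurry ∧ Measurable J.uncurry ∧
      (∀ p x i, T p x i ∈ Icc (a i) (b i)) ∧
      (∀ p x, (∀ i, x i ∈ Ioo (a i) (b i)) → (∀ i, T p x i ∈ Ioo (a i) (b i)) ∧
        (∀ i, 0 < J p x i) ∧
        (∀ i, HasDerivAt (fun t => T p (Function.update x i t) i) (J p x i) (x i)) ∧
        F p x * ∏ i, w i (x i) = G p (T p x) * (∏ i, w i (T p x i)) * ∏ i, J p x i) ∧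
      (∀ p (h : (Fin n → ℝ) → ENNReal), Measurable h →
        ∫⁻ x, ENNReal.ofReal (F p x) * h (T p x)
            ∂Measure.pi (fun i => intervalWeight (a i) (b i) (w i)) =
          ∫⁻ y, ENNReal.ofReal (G p y) * h y
            ∂Measure.pi (fun i => intervalWeight (a i) (b i) (w i))) := by
  induction n with
  | zero =>
    intro P _ _ _ _ _ a b w hab hw hwpos F G hF hG hF0 hG0 hmass
    have hFG (p x) : F p x = G p x := by
      have := hmass p
      rw [Measure.pi_of_empty (x := x), integral_dirac, integral_dirac] at this
      exact this
    refine ⟨fun _ x => x, fun _ x => x, continuous_snd, measurable_snd, fun _ _ i => i.elim0,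
      fun p x _ => ⟨fun i => i.elim0, fun i => i.elim0, fun i => i.elim0, ?_⟩, fun p h _ => ?_⟩
    · simp [hFG]
    · simp [hFG]
  | succ n ih =>
    intro P _ _ _ _ _ a b w hab hw hwpos F G hF hG hF0 hG0 hmass
    have := fun i => isFiniteMeasure_intervalWeight (a := a i) (b := b i) (hw i)
    set ν := fun i => intervalWeight (a i) (b i) (w i) with hν
    set ν' := Measure.pi (fun j : Fin n => intervalWeight (a j.succ) (b j.succ) (w j.succ)) with hν'
    have hcons : Continuous fun q : ℝ × (Fin n → ℝ) => (Fin.cons q.1 q.2 : Fin (n + 1) → ℝ) := by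
      fun_prop
    have hcF : Continuous fun z : (P × ℝ) × (Fin n → ℝ) =>
        F z.1.1 (Fin.cons z.1.2 z.2 : Fin (n + 1) → ℝ) :=
      hF.comp (f := fun z : (P × ℝ) × (Fin n → ℝ) =>
        (z.1.1, (Fin.cons z.1.2 z.2 : Fin (n + 1) → ℝ))) (by fun_prop)
    have hcG : Continuous fun z : (P × ℝ) × (Fin n → ℝ) =>
        G z.1.1 (Fin.cons z.1.2 z.2 : Fin (n + 1) → ℝ) :=
      hG.comp (f := fun z : (P × ℝ) × (Fin n → ℝ) =>
        (z.1.1, (Fin.cons z.1.2 z.2 : Fin (n + 1) → ℝ))) (by fun_prop)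
    set φ : P → ℝ → ℝ := fun p t => ∫ y, F p (Fin.cons t y : Fin (n + 1) → ℝ) ∂ν' with hφ
    set ψ : P → ℝ → ℝ := fun p t => ∫ y, G p (Fin.cons t y : Fin (n + 1) → ℝ) ∂ν' with hψ
    have hφc : Continuous φ.uncurry :=
      continuous_integral_pi_intervalWeight (f := fun (q : P × ℝ) y =>
        F q.1 (Fin.cons q.2 y : Fin (n + 1) → ℝ)) (fun j => hw j.succ) hcF
    have hψc : Continuous ψ.uncurry :=
      continuous_integral_pi_intervalWeight (f := fun (q : P × ℝ) y =>
        G q.1 (Fin.cons q.2 y : Fin (n + 1) → ℝ)) (fun j => hw j.succ) hcG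
    have hφ0 (p t) : 0 < φ p t :=
      integral_pos_pi_intervalWeight (fun j => hab j.succ) (fun j => hw j.succ)
        (fun j => hwpos j.succ) (hcF.comp (Continuous.prodMk_right (p, t))) fun y => hF0 _ _
    have hψ0 (p t) : 0 < ψ p t :=
      integral_pos_pi_intervalWeight (fun j => hab j.succ) (fun j => hw j.succ)
        (fun j => hwpos j.succ) (hcG.comp (Continuous.prodMk_right (p, t))) fun y => hG0 _ _
    have hFp (p) : Continuous (F p) := hF.comp (Continuous.prodMk_right p)
    have hGp (p) : Continuous (G p) := hG.comp (Continuous.prodMk_right p)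
    have hm (p) : ∫ t in a 0..b 0, φ p t * w 0 t = ∫ t in a 0..b 0, ψ p t * w 0 t := by
      have := hmass p
      rw [integral_pi_cons ν (integrable_pi_intervalWeight hw (hFp p)),
        integral_pi_cons ν (integrable_pi_intervalWeight hw (hGp p)),
        integral_intervalWeight (hw 0) (hwpos 0), integral_intervalWeight (hw 0) (hwpos 0)] at this
      simp only [intervalIntegral.integral_of_le (hab 0).le, integral_Ioc_eq_integral_Ioo]
      simpa only [mul_comm] using this
    obtain ⟨S, hSc, hSI, hSo, hSd, hSi⟩ :=
      exists_monotone_transport (hab 0) hφc hψc hφ0 hψ0 (hw 0) (hwpos 0) hm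
    set ρ : P × ℝ → ℝ := fun q => φ q.1 q.2 / ψ q.1 (S q.1 q.2) with hρ
    have hψS : Continuous fun q : P × ℝ => ψ q.1 (S q.1 q.2) :=
      hψc.comp (f := fun q : P × ℝ => (q.1, S q.1 q.2)) (continuous_fst.prodMk hSc)
    have hρc : Continuous ρ := hφc.div hψS fun q => (hψ0 _ _).ne'
    have hρ0 (q) : 0 < ρ q := div_pos (hφ0 _ _) (hψ0 _ _)
    have hSc' : Continuous fun z : (P × ℝ) × (Fin n → ℝ) => S z.1.1 z.1.2 :=
      hSc.comp continuous_fst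
    obtain ⟨T, J, hTc, hJm, hTI, hTo, hTi⟩ := ih (P := P × ℝ)
      (F := fun q y => F q.1 (Fin.cons q.2 y : Fin (n + 1) → ℝ))
      (G := fun q y => G q.1 (Fin.cons (S q.1 q.2) y : Fin (n + 1) → ℝ) * ρ q)
      (fun j => hab j.succ) (fun j => hw j.succ) (fun j => hwpos j.succ) hcF
      ((hG.comp (f := fun z : (P × ℝ) × (Fin n → ℝ) =>
        (z.1.1, (Fin.cons (S z.1.1 z.1.2) z.2 : Fin (n + 1) → ℝ))) (by fun_prop)).mul
          (hρc.comp continuous_fst)) (fun q y => hF0 _ _) (fun q y => mul_pos (hG0 _ _) (hρ0 q))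
      (fun q => by
        rw [integral_mul_const]
        change φ q.1 q.2 = ψ q.1 (S q.1 q.2) * ρ q
        rw [hρ]
        field_simp [(hψ0 q.1 (S q.1 q.2)).ne'])
    refine ⟨fun p x => Fin.cons (S p (x 0)) (T (p, x 0) (Fin.tail x)),
      fun p x => Fin.cons (φ p (x 0) * w 0 (x 0) / (ψ p (S p (x 0)) * w 0 (S p (x 0))))
        (J (p, x 0) (Fin.tail x)), ?_, ?_, ?_, ?_, ?_⟩
    · refine continuous_pi fun i => ?_
      refine Fin.cases ?_ (fun j => ?_) i
      · exact hSc.comp (f := fun z : P × (Fin (n + 1) → ℝ) => (z.1, z.2 0)) (by fun_prop)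
      · exact (continuous_apply j).comp (hTc.comp (f := fun z : P × (Fin (n + 1) → ℝ) =>
          ((z.1, z.2 0), Fin.tail z.2))
          ((by fun_prop : Continuous fun z : P × (Fin (n + 1) → ℝ) => (z.1, z.2 0)).prodMk
            (continuous_pi fun k => (continuous_apply k.succ).comp continuous_snd)))
    · refine measurable_pi_iff.2 fun i => ?_
      refine Fin.cases ?_ (fun j => ?_) i
      · have h1 : Measurable fun z : P × ℝ =>
            φ z.1 z.2 * w 0 z.2 / (ψ z.1 (S z.1 z.2) * w 0 (S z.1 z.2)) :=
          (hφc.measurable.mul ((hw 0).measurable.comp measurable_snd)).div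
            (hψS.measurable.mul ((hw 0).measurable.comp hSc.measurable))
        exact h1.comp (g := fun z : P × ℝ =>
            φ z.1 z.2 * w 0 z.2 / (ψ z.1 (S z.1 z.2) * w 0 (S z.1 z.2)))
          (f := fun z : P × (Fin (n + 1) → ℝ) => (z.1, z.2 0)) (by fun_prop)
      · exact (measurable_pi_apply j).comp (hJm.comp (f := fun z : P × (Fin (n + 1) → ℝ) =>
          ((z.1, z.2 0), Fin.tail z.2))
          ((by fun_prop : Measurable fun z : P × (Fin (n + 1) → ℝ) => (z.1, z.2 0)).prodMk
            (measurable_pi_iff.2 fun k => (measurable_pi_apply k.succ).comp measurable_snd)))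
    · intro p x i
      refine Fin.cases ?_ (fun j => ?_) i
      · exact hSI _ _
      · exact hTI _ _ _
    · intro p x hx
      obtain ⟨h1, h2, h3, h4⟩ := hTo (p, x 0) (Fin.tail x) (fun j => hx j.succ)
      have hS0 := hSo p _ (hx 0)
      have hw0 := hwpos 0 _ (hx 0)
      have hw1 := hwpos 0 _ hS0
      have hp0 := hφ0 p (x 0)
      have hp1 := hψ0 p (S p (x 0))
      refine ⟨fun i => ?_, fun i => ?_, fun i => ?_, ?_⟩
      · refine Fin.cases ?_ (fun j => ?_) i
        · exact hS0
        · exact h1 j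
      · refine Fin.cases ?_ (fun j => ?_) i
        · simp only [Fin.cons_zero]; positivity
        · exact h2 j
      · refine Fin.cases ?_ (fun j => ?_) i
        · simpa using hSd p _ (hx 0)
        · simp only [Fin.cons_succ, Fin.tail_update_succ,
            Function.update_of_ne (Fin.succ_ne_zero j).symm]
          exact h3 j
      · simp only [Fin.prod_univ_succ, Fin.cons_zero, Fin.cons_succ]
        simp only [Fin.tail, hρ] at h4
        rw [Fin.cons_self_tail] at h4
        rw [mul_left_comm, h4]
        field_simp
    · intro p h hh
      have hTm : Measurable fun x : Fin (n + 1) → ℝ =>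
          (Fin.cons (S p (x 0)) (T (p, x 0) (Fin.tail x)) : Fin (n + 1) → ℝ) := by
        refine measurable_pi_iff.2 fun i => ?_
        refine Fin.cases ?_ (fun j => ?_) i
        · exact (hSc.comp (f := fun x : Fin (n + 1) → ℝ => (p, x 0)) (by fun_prop)).measurable
        · exact ((continuous_apply j).comp (hTc.comp (f := fun x : Fin (n + 1) → ℝ =>
            ((p, x 0), Fin.tail x))
            ((by fun_prop : Continuous fun x : Fin (n + 1) → ℝ => (p, x 0)).prodMk
              (continuous_pi fun k => continuous_apply k.succ)))).measurable
      have e1 := lintegral_pi_cons ν (f := fun x => ENNReal.ofReal (F p x) *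
          h (Fin.cons (S p (x 0)) (T (p, x 0) (Fin.tail x))))
        ((hFp p).measurable.ennreal_ofReal.mul (hh.comp hTm))
      have e2 := lintegral_pi_cons ν (f := fun x => ENNReal.ofReal (G p x) * h x)
        ((hGp p).measurable.ennreal_ofReal.mul hh)
      refine e1.trans (Eq.trans ?_ e2.symm)
      set H : ℝ → ENNReal := fun s => ∫⁻ y, ENNReal.ofReal (G p (Fin.cons s y : Fin (n + 1) → ℝ)) *
        h (Fin.cons s y) ∂ν' with hH
      have hcm (s : ℝ) : Measurable fun y : Fin n → ℝ => (Fin.cons s y : Fin (n + 1) → ℝ) :=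
        (hcons.comp (Continuous.prodMk_right s)).measurable
      have inner (t : ℝ) : ∫⁻ y, ENNReal.ofReal (F p (Fin.cons t y : Fin (n + 1) → ℝ)) *
          h (Fin.cons (S p t) (T (p, t) y)) ∂ν' = ENNReal.ofReal (ρ (p, t)) * H (S p t) := by
        rw [hTi (p, t) (fun y => h (Fin.cons (S p t) y)) (hh.comp (hcm _)), hH,
          ← lintegral_const_mul]
        · refine lintegral_congr fun y => ?_
          rw [ENNReal.ofReal_mul (hG0 _ _).le]
          ring
        · exact ((hGp p).measurable.comp (hcm _)).ennreal_ofReal.mul (hh.comp (hcm _))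
      have key := hSi p (fun s => ENNReal.ofReal (ψ p s)⁻¹ * H s)
      change ∫⁻ t, ∫⁻ y, ENNReal.ofReal (F p (Fin.cons t y : Fin (n + 1) → ℝ)) *
          h (Fin.cons (S p t) (T (p, t) y)) ∂ν' ∂ν 0 = ∫⁻ s, H s ∂ν 0
      simp only [inner]
      rw [lintegral_intervalWeight (hw 0), lintegral_intervalWeight (hw 0)]
      convert key using 1
      · refine setLIntegral_congr_fun measurableSet_Ioo fun t ht => ?_
        simp only [hρ]
        rw [← mul_assoc, ← mul_assoc, ← ENNReal.ofReal_mul (hwpos 0 t ht).le,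
          ← ENNReal.ofReal_mul (mul_pos (hφ0 _ _) (hwpos 0 t ht)).le]
        congr 2
        ring
      · refine setLIntegral_congr_fun measurableSet_Ioo fun t ht => ?_
        rw [← mul_assoc, ← ENNReal.ofReal_mul (mul_pos (hψ0 _ _) (hwpos 0 t ht)).le]
        congr 2
        field_simp [(hψ0 p t).ne']

lemma continuous_abs_rpow {α : ℝ} (hα : 0 ≤ α) : Continuous fun t : ℝ => |t| ^ α :=
  continuous_abs.rpow_const fun _ => Or.inr hα

lemma abs_rpow_pos_of_mem {α a b : ℝ} (hα : 0 ≤ α) (ha : 0 < α → a = 0) :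
    ∀ t ∈ Ioo a b, 0 < |t| ^ α := by
  intro t ht
  rcases hα.eq_or_lt with h | h
  · simp [← h]
  · rw [ha h] at ht
    exact rpow_pos_of_pos (abs_pos.2 ht.1.ne') _

lemma hasDerivAt_abs_rpow_of_mem {α a b : ℝ} (hα : 0 ≤ α) (ha : 0 < α → a = 0) {t : ℝ}
    (ht : t ∈ Ioo a b) : HasDerivAt (fun s : ℝ => |s| ^ α) (α * |t| ^ α / t) t := by
  rcases hα.eq_or_lt with h | h
  · simpa [← h] using hasDerivAt_const t (1 : ℝ)
  · rw [ha h] at ht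
    have h1 := hasDerivAt_rpow_const (x := t) (p := α) (Or.inl ht.1.ne')
    rw [abs_of_pos ht.1, mul_div_assoc, ← rpow_sub_one ht.1.ne']
    refine h1.congr_of_eventuallyEq ?_
    filter_upwards [Ioi_mem_nhds ht.1] with s hs
    rw [abs_of_pos hs]

lemma lintegral_weight_divergence {α a b : ℝ} (hab : a < b) (hα : 0 ≤ α) (ha : 0 < α → a = 0)
    {u u' T T' : ℝ → ℝ} (hu : ∀ x, HasDerivAt u (u' x) x) (hu' : Continuous u')
    (hu0 : ∀ x, 0 ≤ u x) (hub : u b = 0) (hua : α = 0 → u a = 0) (hTc : Continuous T)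
    (hT : ∀ x ∈ Ioo a b, HasDerivAt T (T' x) x) (hT'0 : ∀ x ∈ Ioo a b, 0 ≤ T' x)
    (hT0 : 0 < α → ∀ x, 0 ≤ T x) :
    0 ≤ -∫ x, u' x * T x ∂intervalWeight a b (fun t => |t| ^ α) ∧
    ∫⁻ x, ENNReal.ofReal (u x * (T' x + α * T x / x)) ∂intervalWeight a b (fun t => |t| ^ α) =
      ENNReal.ofReal (-∫ x, u' x * T x ∂intervalWeight a b (fun t => |t| ^ α)) := by
  have hwc := continuous_abs_rpow hα
  have hwpos := abs_rpow_pos_of_mem (b := b) hα ha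
  rw [lintegral_intervalWeight hwc, integral_intervalWeight hwc hwpos]
  have huc : Continuous u := continuous_iff_continuousAt.2 fun x => (hu x).continuousAt
  set k : ℝ → ℝ := fun t => |t| ^ α * (u' t * T t) with hk
  have hkc : Continuous k := hwc.mul (hu'.mul hTc)
  set g : ℝ → ℝ := fun x => u x * T x * |x| ^ α - ∫ t in a..x, k t with hg
  set g' : ℝ → ℝ := fun x => |x| ^ α * (u x * (T' x + α * T x / x)) with hg'
  have hgc : Continuous g := ((huc.mul hTc).mul hwc).sub
    (intervalIntegral.continuous_primitive (fun _ _ => hkc.intervalIntegrable _ _) a)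
  have hgd : ∀ x ∈ Ioo a b, HasDerivAt g (g' x) x := by
    intro x hx
    have h1 := ((hu x).mul (hT x hx)).mul (hasDerivAt_abs_rpow_of_mem hα ha hx)
    have h2 := intervalIntegral.integral_hasDerivAt_right (hkc.intervalIntegrable a x)
      (hkc.stronglyMeasurableAtFilter _ _) hkc.continuousAt
    refine (h1.sub h2).congr_deriv ?_
    simp only [hg', hk, Pi.mul_apply]
    ring
  have hg0 : ∀ x ∈ Ioo a b, 0 ≤ g' x := by
    intro x hx
    refine mul_nonneg (hwpos x hx).le (mul_nonneg (hu0 x) (add_nonneg (hT'0 x hx) ?_))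
    rcases hα.eq_or_lt with h | h
    · simp [← h]
    · have := ha h
      subst this
      exact div_nonneg (mul_nonneg hα (hT0 h x)) hx.1.le
  have hgi := intervalIntegral.integrableOn_deriv_of_nonneg hgc.continuousOn hgd hg0
  have hval := intervalIntegral.integral_eq_sub_of_hasDerivAt_of_le hab.le hgc.continuousOn hgd
    ((intervalIntegrable_iff_integrableOn_Ioc_of_le hab.le).2 hgi)
  have hga : g a = 0 := by
    simp only [hg, intervalIntegral.integral_same, sub_zero]
    rcases hα.eq_or_lt with h | h
    · simp [hua h.symm]
    · simp [ha h, zero_rpow h.ne']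
  have hgb : g b = -∫ t in a..b, k t := by simp [hg, hub]
  rw [hga, hgb, sub_zero, intervalIntegral.integral_of_le hab.le,
    intervalIntegral.integral_of_le hab.le, integral_Ioc_eq_integral_Ioo,
    integral_Ioc_eq_integral_Ioo] at hval
  have hgi' : IntegrableOn g' (Ioo a b) := hgi.mono_set Ioo_subset_Ioc_self
  have hg0' : 0 ≤ᵐ[volume.restrict (Ioo a b)] g' :=
    (ae_restrict_mem measurableSet_Ioo).mono hg0
  rw [← hval]
  refine ⟨integral_nonneg_of_ae hg0', ?_⟩
  rw [ofReal_integral_eq_lintegral_ofReal hgi' hg0']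
  refine setLIntegral_congr_fun measurableSet_Ioo fun x hx => ?_
  rw [← ENNReal.ofReal_mul (hwpos x hx).le]

lemma lintegral_pi_weight_divergence {n : ℕ} {A a b : Fin (n + 1) → ℝ} (hab : ∀ i, a i < b i)
    (hA : ∀ i, 0 ≤ A i) (ha : ∀ i, 0 < A i → a i = 0) (i : Fin (n + 1))
    {u u' T J : (Fin (n + 1) → ℝ) → ℝ}
    (hu : ∀ x, HasDerivAt (fun t => u (Function.update x i t)) (u' x) (x i))
    (huc : Continuous u) (hu' : Continuous u') (hu0 : ∀ x, 0 ≤ u x)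
    (hub : ∀ x, x i = b i → u x = 0) (hua : A i = 0 → ∀ x, x i = a i → u x = 0)
    (hTc : Continuous T) (hJm : Measurable J)
    (hT : ∀ x, (∀ j, x j ∈ Ioo (a j) (b j)) → 0 ≤ J x ∧
      HasDerivAt (fun t => T (Function.update x i t)) (J x) (x i))
    (hT0 : 0 < A i → ∀ x, 0 ≤ T x) :
    0 ≤ -∫ x, u' x * T x ∂Measure.pi (fun j => intervalWeight (a j) (b j) (fun t => |t| ^ A j)) ∧
    ∫⁻ x, ENNReal.ofReal (u x * (J x + A i * T x / x i))
        ∂Measure.pi (fun j => intervalWeight (a j) (b j) (fun t => |t| ^ A j)) =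
      ENNReal.ofReal (-∫ x, u' x * T x
        ∂Measure.pi (fun j => intervalWeight (a j) (b j) (fun t => |t| ^ A j))) := by
  have := fun j => isFiniteMeasure_intervalWeight (a := a j) (b := b j)
    (continuous_abs_rpow (hA j))
  set ν := fun j => intervalWeight (a j) (b j) (fun t => |t| ^ A j) with hν
  set ν' := Measure.pi (fun j => ν (i.succAbove j)) with hν'
  have hins : Continuous fun q : ℝ × (Fin n → ℝ) => (i.insertNth q.1 q.2 : Fin (n + 1) → ℝ) := by
    fun_prop
  have hI : Integrable (fun x => u' x * T x) (Measure.pi ν) :=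
    integrable_pi_intervalWeight (fun j => continuous_abs_rpow (hA j)) (hu'.mul hTc)
  have hI' : Integrable (fun q : ℝ × (Fin n → ℝ) =>
      u' (i.insertNth q.1 q.2) * T (i.insertNth q.1 q.2)) ((ν i).prod ν') :=
    ((measurePreserving_piFinSuccAbove ν i).symm.integrable_comp_emb
      (MeasurableEquiv.measurableEmbedding _)).2 hI
  have key : ∀ᵐ y ∂ν', 0 ≤ (-∫ t, u' (i.insertNth t y) * T (i.insertNth t y) ∂ν i) ∧
      ∫⁻ t, ENNReal.ofReal (u (i.insertNth t y) * (J (i.insertNth t y) +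
        A i * T (i.insertNth t y) / t)) ∂ν i =
        ENNReal.ofReal (-∫ t, u' (i.insertNth t y) * T (i.insertNth t y) ∂ν i) := by
    filter_upwards [ae_mem_pi_intervalWeight (a := fun j => a (i.succAbove j))
      (b := fun j => b (i.succAbove j)) (w := fun j t => |t| ^ A (i.succAbove j))
      (fun j => continuous_abs_rpow (hA _))] with y hy
    have hc : Continuous fun t : ℝ => (i.insertNth t y : Fin (n + 1) → ℝ) :=
      hins.comp (Continuous.prodMk_left y)
    have hup (s t : ℝ) : Function.update (i.insertNth s y : Fin (n + 1) → ℝ) i t =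
        i.insertNth t y := by simp
    have hbox (t : ℝ) (ht : t ∈ Ioo (a i) (b i)) (j) :
        (i.insertNth t y : Fin (n + 1) → ℝ) j ∈ Ioo (a j) (b j) := by
      refine Fin.succAboveCases i ?_ (fun k => ?_) j
      · simpa using ht
      · simpa using hy k
    refine lintegral_weight_divergence (hab i) (hA i) (ha i)
      (u := fun t => u (i.insertNth t y)) (u' := fun t => u' (i.insertNth t y))
      (T := fun t => T (i.insertNth t y)) (T' := fun t => J (i.insertNth t y))
      (fun t => ?_) (hu'.comp hc) (fun t => hu0 _) (hub _ (by simp)) (fun h => hua h _ (by simp))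
      (hTc.comp hc) (fun t ht => ?_) (fun t ht => (hT _ (hbox t ht)).1) (fun h t => hT0 h _)
    · have := hu (i.insertNth t y)
      simpa only [hup, Fin.insertNth_apply_same] using this
    · have := (hT _ (hbox t ht)).2
      simpa only [hup, Fin.insertNth_apply_same] using this
  have e1 : ∫ x, u' x * T x ∂Measure.pi ν =
      ∫ y, ∫ t, u' (i.insertNth t y) * T (i.insertNth t y) ∂ν i ∂ν' := by
    rw [← (measurePreserving_piFinSuccAbove ν i).symm.integral_comp' (fun x => u' x * T x)]
    exact integral_prod_symm _ hI'
  have e2 : ∫⁻ x, ENNReal.ofReal (u x * (J x + A i * T x / x i)) ∂Measure.pi ν =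
      ∫⁻ y, ∫⁻ t, ENNReal.ofReal (u (i.insertNth t y) * (J (i.insertNth t y) +
        A i * T (i.insertNth t y) / t)) ∂ν i ∂ν' := by
    have hm : Measurable fun x => ENNReal.ofReal (u x * (J x + A i * T x / x i)) :=
      (huc.measurable.mul (hJm.add ((hTc.measurable.const_mul _).div
        (measurable_pi_apply i)))).ennreal_ofReal
    rw [← (measurePreserving_piFinSuccAbove ν i).symm.lintegral_comp hm]
    refine (lintegral_prod_symm _ (hm.comp
      (measurePreserving_piFinSuccAbove ν i).symm.measurable).aemeasurable).trans ?_
    refine lintegral_congr fun y => lintegral_congr fun t => ?_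
    change ENNReal.ofReal (u (i.insertNth t y) * (J (i.insertNth t y) +
      A i * T (i.insertNth t y) / (i.insertNth t y : Fin (n + 1) → ℝ) i)) = _
    rw [Fin.insertNth_apply_same]
  have e3 : -∫ x, u' x * T x ∂Measure.pi ν =
      ∫ y, (-∫ t, u' (i.insertNth t y) * T (i.insertNth t y) ∂ν i) ∂ν' := by
    rw [e1, integral_neg]
  rw [e2, e3]
  refine ⟨integral_nonneg_of_ae (key.mono fun y hy => hy.1), ?_⟩
  have hJ' : Integrable (fun y => -∫ t, u' (i.insertNth t y) * T (i.insertNth t y) ∂ν i) ν' :=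
    hI'.integral_prod_right.neg
  rw [ofReal_integral_eq_lintegral_ofReal hJ'
    (key.mono fun y hy => hy.1)]
  exact lintegral_congr_ae (key.mono fun y hy => hy.2)

/-- The weighted arithmetic-geometric mean inequality behind the transport argument. -/
lemma weighted_amgm {n : ℕ} {A : Fin n → ℝ} (hA : ∀ i, 0 ≤ A i) {D : ℝ}
    (hD : D = n + ∑ i, A i) (hD0 : 0 < D) {J r : Fin n → ℝ} (hJ : ∀ i, 0 ≤ J i)
    (hr : ∀ i, 0 ≤ r i) :
    D * ((∏ i, J i) * ∏ i, r i ^ A i) ^ (1 / D) ≤ ∑ i, (J i + A i * r i) := by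
  have h := Real.geom_mean_le_arith_mean_weighted (Finset.univ : Finset (Fin n ⊕ Fin n))
    (Sum.elim (fun _ => 1 / D) (fun i => A i / D)) (Sum.elim J r)
    (by rintro (i | i) _ <;> simp [hA, hD0.le, div_nonneg])
    (by
      simp only [Fintype.sum_sum_type, Sum.elim_inl, Sum.elim_inr, Finset.sum_const,
        ← Finset.sum_div, Finset.card_univ, Fintype.card_fin, nsmul_eq_mul]
      rw [mul_one_div, ← add_div, ← hD, div_self hD0.ne'])
    (by rintro (i | i) _ <;> simp [hJ, hr])
  simp only [Fintype.prod_sum_type, Fintype.sum_sum_type, Sum.elim_inl, Sum.elim_inr] at h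
  rw [mul_rpow (Finset.prod_nonneg fun i _ => hJ i)
    (Finset.prod_nonneg fun i _ => rpow_nonneg (hr i) _),
    ← Real.finsetProd_rpow _ _ (fun i _ => hJ i),
    ← Real.finsetProd_rpow _ _ (fun i _ => rpow_nonneg (hr i) _)]
  have h2 : ∏ i, (r i ^ A i) ^ (1 / D) = ∏ i, r i ^ (A i / D) :=
    Finset.prod_congr rfl fun i _ => by rw [← rpow_mul (hr i), mul_one_div]
  rw [h2]
  refine (mul_le_mul_of_nonneg_left h hD0.le).trans (le_of_eq ?_)
  rw [← Finset.sum_add_distrib, Finset.mul_sum]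
  refine Finset.sum_congr rfl fun i _ => ?_
  field_simp

lemma memLp_pi_intervalWeight {n : ℕ} {a b : Fin n → ℝ} {w : Fin n → ℝ → ℝ}
    (hw : ∀ i, Continuous (w i)) {f : (Fin n → ℝ) → ℝ} (hf : Continuous f) {p : ℝ} (hp : 0 < p) :
    MemLp f (ENNReal.ofReal p) (Measure.pi (fun i => intervalWeight (a i) (b i) (w i))) := by
  rw [← integrable_norm_rpow_iff hf.aestronglyMeasurable (by simpa using hp) (by simp),
    ENNReal.toReal_ofReal hp.le]
  exact integrable_pi_intervalWeight hw (hf.norm.rpow_const fun _ => Or.inr hp.le)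

/-- The Knothe map between two densities on a box, together with the inequality obtained by
integrating the arithmetic-geometric mean inequality for its weighted divergence by parts. -/
theorem exists_transport_divergence_le {n : ℕ} {A a b : Fin (n + 1) → ℝ} (hab : ∀ i, a i < b i)
    (hA : ∀ i, 0 ≤ A i) (ha : ∀ i, 0 < A i → a i = 0) {D : ℝ}
    (hD : D = (n + 1 : ℕ) + ∑ i, A i) (hD0 : 0 < D)
    {F G u : (Fin (n + 1) → ℝ) → ℝ} (hF : Continuous F) (hG : Continuous G) (hF0 : ∀ x, 0 < F x)
    (hG0 : ∀ x, 0 < G x)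
    (hFG : ∫ x, F x ∂Measure.pi (fun i => intervalWeight (a i) (b i) (fun t => |t| ^ A i)) =
      ∫ x, G x ∂Measure.pi (fun i => intervalWeight (a i) (b i) (fun t => |t| ^ A i)))
    {u' : (Fin (n + 1) → ℝ) → Fin (n + 1) → ℝ}
    (hu : ∀ x i, HasDerivAt (fun t => u (Function.update x i t)) (u' x i) (x i))
    (huc : Continuous u) (hu' : Continuous u') (hu0 : ∀ x, 0 ≤ u x)
    (hub : ∀ x i, x i = b i → u x = 0) (hua : ∀ x i, A i = 0 → x i = a i → u x = 0) :
    ∃ T : (Fin (n + 1) → ℝ) → (Fin (n + 1) → ℝ), Continuous T ∧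
      (∀ x i, T x i ∈ Icc (a i) (b i)) ∧
      (∀ h : (Fin (n + 1) → ℝ) → ENNReal, Measurable h →
        ∫⁻ x, ENNReal.ofReal (F x) * h (T x)
            ∂Measure.pi (fun i => intervalWeight (a i) (b i) (fun t => |t| ^ A i)) =
          ∫⁻ y, ENNReal.ofReal (G y) * h y
            ∂Measure.pi (fun i => intervalWeight (a i) (b i) (fun t => |t| ^ A i))) ∧
      D * ∫ x, u x * (F x / G (T x)) ^ (1 / D)
          ∂Measure.pi (fun i => intervalWeight (a i) (b i) (fun t => |t| ^ A i)) ≤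
        ∫ x, -∑ i, u' x i * T x i
          ∂Measure.pi (fun i => intervalWeight (a i) (b i) (fun t => |t| ^ A i)) := by
  have hwc := fun i => continuous_abs_rpow (hA i)
  have hwpos := fun i => abs_rpow_pos_of_mem (b := b i) (hA i) (ha i)
  obtain ⟨T, J, hTc, hJm, hTI, hTJ, hpush⟩ := exists_knothe_transport (n + 1) (P := Unit) hab hwc
    hwpos (F := fun _ => F) (G := fun _ => G) (hF.comp continuous_snd) (hG.comp continuous_snd)
    (fun _ => hF0) (fun _ => hG0) (fun _ => hFG)
  have hTc : Continuous (T ()) := hTc.comp (Continuous.prodMk_right ())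
  have hJm : Measurable (J ()) := hJm.comp measurable_prodMk_left
  refine ⟨T (), hTc, hTI (), hpush (), ?_⟩
  set μ := Measure.pi (fun i => intervalWeight (a i) (b i) (fun t => |t| ^ A i)) with hμ
  have hdiv := fun i => lintegral_pi_weight_divergence hab hA ha i (u := u) (u' := fun x => u' x i)
    (T := fun x => T () x i) (J := fun x => J () x i) (fun x => hu x i) huc
    ((continuous_apply i).comp hu') hu0 (fun x => hub x i) (fun h x => hua x i h)
    ((continuous_apply i).comp hTc) (by fun_prop)
    (fun x hx => ⟨((hTJ () x hx).2.1 i).le, (hTJ () x hx).2.2.1 i⟩)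
    (fun h x => (ha i h).symm.le.trans (hTI () x i).1)
  have hGT : Continuous fun x => u x * (F x / G (T () x)) ^ (1 / D) :=
    huc.mul ((hF.div (hG.comp hTc) fun x => (hG0 _).ne').rpow_const
      fun x => Or.inl (div_pos (hF0 _) (hG0 _)).ne')
  have hGT0 : ∀ x, 0 ≤ u x * (F x / G (T () x)) ^ (1 / D) := fun x =>
    mul_nonneg (hu0 x) (rpow_nonneg (div_pos (hF0 _) (hG0 _)).le _)
  have hpt : ∀ᵐ x ∂μ, ENNReal.ofReal (D * (u x * (F x / G (T () x)) ^ (1 / D))) ≤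
      ∑ i, ENNReal.ofReal (u x * (J () x i + A i * T () x i / x i)) := by
    filter_upwards [ae_mem_pi_intervalWeight (a := a) (b := b) hwc] with x hx
    obtain ⟨h1, h2, -, h4⟩ := hTJ () x hx
    have hnn (i) : A i * (|T () x i| / |x i|) = A i * T () x i / x i := by
      rcases (hA i).eq_or_lt with h | h
      · simp [← h]
      · have hx1 := (hx i).1
        have ht1 := (h1 i).1
        rw [ha i h] at hx1 ht1
        rw [abs_of_pos hx1, abs_of_pos ht1, mul_div_assoc]
    have hpos (i) : 0 ≤ J () x i + A i * T () x i / x i := by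
      rw [← hnn]
      exact add_nonneg (h2 i).le (mul_nonneg (hA i) (by positivity))
    have hag := weighted_amgm hA hD hD0 (fun i => (h2 i).le)
      (fun i => (by positivity : 0 ≤ |T () x i| / |x i|))
    rw [show (∏ i, J () x i) * ∏ i, (|T () x i| / |x i|) ^ A i = F x / G (T () x) by
      rw [eq_div_iff (hG0 _).ne']
      have : ∏ i, (|T () x i| / |x i|) ^ A i = (∏ i, |T () x i| ^ A i) / ∏ i, |x i| ^ A i := by
        rw [← Finset.prod_div_distrib]
        exact Finset.prod_congr rfl fun i _ => div_rpow (abs_nonneg _) (abs_nonneg _) _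
      rw [this, mul_div_assoc', div_mul_eq_mul_div,
        div_eq_iff (Finset.prod_pos fun i _ => hwpos i _ (hx i)).ne', h4]
      ring] at hag
    rw [← ENNReal.ofReal_sum_of_nonneg fun i _ => mul_nonneg (hu0 x) (hpos i), ← Finset.mul_sum,
      mul_left_comm]
    refine ENNReal.ofReal_le_ofReal (mul_le_mul_of_nonneg_left (hag.trans_eq ?_) (hu0 x))
    exact Finset.sum_congr rfl fun i _ => by rw [hnn]
  have hgi (i) : Integrable (fun x => u' x i * T () x i) μ :=
    integrable_pi_intervalWeight hwc (by fun_prop)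
  rw [integral_neg, integral_finsetSum _ fun i _ => hgi i, ← Finset.sum_neg_distrib,
    ← integral_const_mul, ← ENNReal.ofReal_le_ofReal_iff (Finset.sum_nonneg fun i _ => (hdiv i).1),
    ofReal_integral_eq_lintegral_ofReal
      (integrable_pi_intervalWeight hwc (hGT.const_mul D))
      (Eventually.of_forall fun x => mul_nonneg hD0.le (hGT0 x)),
    ENNReal.ofReal_sum_of_nonneg fun i _ => (hdiv i).1]
  refine (lintegral_mono_ae hpt).trans_eq ?_
  rw [lintegral_finsetSum']
  · exact Finset.sum_congr rfl fun i _ => (hdiv i).2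
  · intro i _
    have := hTc.measurable
    have := huc.measurable
    fun_prop

lemma continuous_abs_rpow_deriv {s : ℝ} (hs : 1 < s) :
    Continuous fun x : ℝ => s * |x| ^ (s - 2) * x := by
  have h := (contDiff_norm_rpow (E := ℝ) hs).continuous_deriv le_rfl
  rwa [show deriv (fun x : ℝ => ‖x‖ ^ s) = fun x : ℝ => s * |x| ^ (s - 2) * x from
    funext fun x => (hasDerivAt_abs_rpow x hs).deriv] at h

/-- The weighted Sobolev inequality on a box, before passing to the limit: `ε` is the constant added
to `|f| ^ r` to make it a positive density. -/
lemma sobolev_box_of_pos {n : ℕ} {A a b : Fin (n + 1) → ℝ} (hab : ∀ i, a i < b i)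
    (hA : ∀ i, 0 ≤ A i) (ha : ∀ i, 0 < A i → a i = 0) {D p q s r : ℝ}
    (hD : D = (n + 1 : ℕ) + ∑ i, A i) (hD1 : 1 < D) (hpq : p.HolderConjugate q)
    (hs : 1 < s) (hr : 0 < r) (hsr : s + r / D = r) (hsq : (s - 1) * q = r)
    {f : (Fin (n + 1) → ℝ) → ℝ} {f' : (Fin (n + 1) → ℝ) → Fin (n + 1) → ℝ}
    (hf : ∀ x i, HasDerivAt (fun t => f (Function.update x i t)) (f' x i) (x i))
    (hfc : Continuous f) (hf' : Continuous f')
    (hfb : ∀ x i, x i = b i → f x = 0) (hfa : ∀ x i, A i = 0 → x i = a i → f x = 0)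
    {μ : Measure (Fin (n + 1) → ℝ)}
    (hμ : μ = Measure.pi (fun i => intervalWeight (a i) (b i) (fun t => |t| ^ A i)))
    {φ : (Fin (n + 1) → ℝ) → ℝ} (hφ : φ = fun x => 1 + ‖WithLp.toLp 2 x‖ ^ q)
    {C : ℝ} (hC : ∀ x ∈ Icc a b, φ x ≤ C) {ε c : ℝ} (hε : 0 < ε)
    (hc : c = (∫ x, (|f x| ^ r + ε) ∂μ) / ∫ x, φ x ^ (-D) ∂μ) :
    D * (c ^ (-(1 / D)) * (c * (∫ x, φ x ^ (1 - D) ∂μ) - ε * (C * μ.real univ))) ≤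
      s * ((∫ x, ‖WithLp.toLp 2 (f' x)‖ ^ p ∂μ) ^ (1 / p) *
        (c * ∫ x, φ x ^ (-D) * ‖WithLp.toLp 2 x‖ ^ q ∂μ) ^ (1 / q)) := by
  have hD0 : 0 < D := by linarith
  have hq0 := hpq.symm.pos
  have hwc := fun i => continuous_abs_rpow (hA i)
  have hwpos := fun i => abs_rpow_pos_of_mem (b := b i) (hA i) (ha i)
  have hfin := fun i => isFiniteMeasure_intervalWeight (a := a i) (b := b i) (hwc i)
  have hμfin : IsFiniteMeasure μ := by rw [hμ]; infer_instance
  have hgi {h : (Fin (n + 1) → ℝ) → ℝ} (hh : Continuous h) : Integrable h μ := by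
    rw [hμ]; exact integrable_pi_intervalWeight hwc hh
  have hpos {h : (Fin (n + 1) → ℝ) → ℝ} (hh : Continuous h) (h0 : ∀ x, 0 < h x) :
      0 < ∫ x, h x ∂μ := by
    rw [hμ]; exact integral_pos_pi_intervalWeight hab hwc hwpos hh h0
  have hmem {h : (Fin (n + 1) → ℝ) → ℝ} (hh : Continuous h) {p : ℝ} (hp : 0 < p) :
      MemLp h (ENNReal.ofReal p) μ := by
    rw [hμ]; exact memLp_pi_intervalWeight hwc hh hp
  have hnc : Continuous fun x : Fin (n + 1) → ℝ => ‖WithLp.toLp 2 x‖ ^ q :=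
    (PiLp.continuous_toLp 2 _).norm.rpow_const fun _ => Or.inr hq0.le
  have hφc : Continuous φ := by rw [hφ]; exact continuous_const.add hnc
  have hφ0 (x) : 0 < φ x := by rw [hφ]; positivity
  have hgc (z : ℝ) : Continuous fun x => φ x ^ z := hφc.rpow_const fun x => Or.inl (hφ0 x).ne'
  have hg0 (z : ℝ) (x) : 0 < φ x ^ z := rpow_pos_of_pos (hφ0 x) _
  have hFc : Continuous fun x => |f x| ^ r + ε :=
    (hfc.abs.rpow_const fun _ => Or.inr hr.le).add continuous_const
  have hF0 (x) : 0 < |f x| ^ r + ε := by positivity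
  have hc0 : 0 < c := by rw [hc]; exact div_pos (hpos hFc hF0) (hpos (hgc _) (hg0 _))
  have hmass : ∫ x, (|f x| ^ r + ε) ∂μ = ∫ x, c * φ x ^ (-D) ∂μ := by
    rw [integral_const_mul, hc, div_mul_cancel₀ _ (hpos (hgc _) (hg0 _)).ne']
  obtain ⟨T, hTc, hTI, hpush, hle⟩ := exists_transport_divergence_le hab hA ha hD hD0 hFc
    ((hgc (-D)).const_mul c) hF0 (fun x => mul_pos hc0 (hg0 _ x)) (by rw [← hμ]; exact hmass)
    (u := fun x => |f x| ^ s) (u' := fun x i => s * |f x| ^ (s - 2) * f x * f' x i)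
    (fun x i => by
      have := (hasDerivAt_abs_rpow (f (Function.update x i (x i))) hs).comp (x i) (hf x i)
      simp only [Function.update_eq_self] at this
      exact this)
    (hfc.abs.rpow_const fun _ => Or.inr (by linarith))
    (continuous_pi fun i => ((continuous_abs_rpow_deriv hs).comp hfc).mul
      ((continuous_apply i).comp hf'))
    (fun x => by positivity)
    (fun x i h => by rw [hfb x i h, abs_zero, zero_rpow (by linarith)])
    (fun x i h h' => by rw [hfa x i h h', abs_zero, zero_rpow (by linarith)])
  rw [← hμ] at hle hpush
  have hpushR {h : (Fin (n + 1) → ℝ) → ℝ} (hh : Continuous h) (h0 : ∀ x, 0 ≤ h x) :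
      ∫ x, (|f x| ^ r + ε) * h (T x) ∂μ = ∫ y, c * φ y ^ (-D) * h y ∂μ := by
    rw [integral_eq_lintegral_of_nonneg_ae
        (Eventually.of_forall fun x => mul_nonneg (hF0 x).le (h0 _))
        (hFc.mul (hh.comp hTc)).aestronglyMeasurable,
      integral_eq_lintegral_of_nonneg_ae
        (Eventually.of_forall fun x => mul_nonneg (mul_pos hc0 (hg0 _ x)).le (h0 _))
        (((hgc _).const_mul c).mul hh).aestronglyMeasurable]
    have := hpush (fun y => ENNReal.ofReal (h y)) hh.measurable.ennreal_ofReal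
    simp only [← ENNReal.ofReal_mul (hF0 _).le,
      ← ENNReal.ofReal_mul (mul_pos hc0 (hg0 _ _)).le] at this
    rw [this]
  have hlow : c ^ (-(1 / D)) * (c * (∫ x, φ x ^ (1 - D) ∂μ) - ε * (C * μ.real univ)) ≤
      ∫ x, |f x| ^ s * ((|f x| ^ r + ε) / (c * φ (T x) ^ (-D))) ^ (1 / D) ∂μ := by
    have h1 : c * (∫ x, φ x ^ (1 - D) ∂μ) = ∫ x, (|f x| ^ r + ε) * φ (T x) ∂μ := by
      rw [hpushR hφc fun x => (hφ0 x).le, ← integral_const_mul]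
      refine integral_congr_ae (Eventually.of_forall fun x => ?_)
      change c * φ x ^ (1 - D) = c * φ x ^ (-D) * φ x
      rw [sub_eq_add_neg, add_comm, rpow_add_one (hφ0 x).ne', mul_assoc]
    have h2 : C * μ.real univ = ∫ _, C ∂μ := by rw [integral_const, smul_eq_mul, mul_comm]
    have hFφ : Continuous fun x => (|f x| ^ r + ε) * φ (T x) := hFc.mul (hφc.comp hTc)
    rw [h1, h2, ← integral_const_mul, ← integral_sub (hgi hFφ)
      (integrable_const _), ← integral_const_mul]
    refine integral_mono (hgi ?_) (hgi ?_) fun x => ?_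
    · exact continuous_const.mul (hFφ.sub continuous_const)
    · exact (hfc.abs.rpow_const fun _ => Or.inr (by linarith)).mul ((hFc.div
        (((hgc _).comp hTc).const_mul c) fun x => (mul_pos hc0 (hg0 _ _)).ne').rpow_const
        fun x => Or.inl (div_pos (hF0 _) (mul_pos hc0 (hg0 _ _))).ne')
    · change c ^ (-(1 / D)) * ((|f x| ^ r + ε) * φ (T x) - ε * C) ≤
        |f x| ^ s * ((|f x| ^ r + ε) / (c * φ (T x) ^ (-D))) ^ (1 / D)
      have h3 : ((|f x| ^ r + ε) / (c * φ (T x) ^ (-D))) ^ (1 / D) =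
          (|f x| ^ r + ε) ^ (1 / D) * c ^ (-(1 / D)) * φ (T x) := by
        rw [div_rpow (hF0 x).le (mul_pos hc0 (hg0 _ _)).le, mul_rpow hc0.le (hg0 _ _).le,
          ← rpow_mul (hφ0 _).le, show -D * (1 / D) = -1 by field_simp, rpow_neg_one,
          rpow_neg hc0.le]
        field_simp
      have h4 : |f x| ^ r ≤ |f x| ^ s * (|f x| ^ r + ε) ^ (1 / D) := by
        calc |f x| ^ r = |f x| ^ s * (|f x| ^ r) ^ (1 / D) := by
              rw [← rpow_mul (abs_nonneg _), mul_one_div,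
                ← rpow_add_of_nonneg (abs_nonneg _) (by linarith) (by positivity), hsr]
          _ ≤ _ := by gcongr; linarith
      have h5 := hC (T x) ⟨fun i => (hTI x i).1, fun i => (hTI x i).2⟩
      have h6 : 0 < c ^ (-(1 / D)) := rpow_pos_of_pos hc0 _
      rw [h3]
      calc c ^ (-(1 / D)) * ((|f x| ^ r + ε) * φ (T x) - ε * C)
          ≤ c ^ (-(1 / D)) * ((|f x| ^ s * (|f x| ^ r + ε) ^ (1 / D)) * φ (T x)) := by
            refine mul_le_mul_of_nonneg_left ?_ h6.le
            nlinarith [hφ0 (T x)]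
        _ = _ := by ring
  have hup : ∫ x, -∑ i, s * |f x| ^ (s - 2) * f x * f' x i * T x i ∂μ ≤
      s * ((∫ x, ‖WithLp.toLp 2 (f' x)‖ ^ p ∂μ) ^ (1 / p) *
        (c * ∫ x, φ x ^ (-D) * ‖WithLp.toLp 2 x‖ ^ q ∂μ) ^ (1 / q)) := by
    have hNc : Continuous fun x => ‖WithLp.toLp 2 (f' x)‖ :=
      ((PiLp.continuous_toLp 2 _).comp hf').norm
    have hHc : Continuous fun x => |f x| ^ (s - 1) * ‖WithLp.toLp 2 (T x)‖ :=
      (hfc.abs.rpow_const fun _ => Or.inr (by linarith)).mul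
        ((PiLp.continuous_toLp 2 _).comp hTc).norm
    have h1 : ∫ x, -∑ i, s * |f x| ^ (s - 2) * f x * f' x i * T x i ∂μ ≤
        ∫ x, s * (‖WithLp.toLp 2 (f' x)‖ * (|f x| ^ (s - 1) * ‖WithLp.toLp 2 (T x)‖)) ∂μ := by
      refine integral_mono (hgi ?_) (hgi (continuous_const.mul (hNc.mul hHc))) fun x => ?_
      · exact (continuous_finsetSum _ fun i _ => (((continuous_abs_rpow_deriv hs).comp hfc).mul
          ((continuous_apply i).comp hf')).mul ((continuous_apply i).comp hTc)).neg
      · have h2 := abs_real_inner_le_norm (WithLp.toLp 2 (f' x)) (WithLp.toLp 2 (T x))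
        have h3 : inner ℝ (WithLp.toLp 2 (f' x)) (WithLp.toLp 2 (T x)) =
            ∑ i, f' x i * T x i := by
          simp [PiLp.inner_apply, mul_comm]
        have h4 : |(|f x| ^ (s - 2) * f x)| = |f x| ^ (s - 1) := by
          rw [abs_mul, abs_of_nonneg (by positivity : 0 ≤ |f x| ^ (s - 2))]
          rcases eq_or_ne (f x) 0 with h | h
          · rw [h, abs_zero, mul_zero, zero_rpow (by linarith)]
          · rw [← rpow_add_one (abs_pos.2 h).ne']
            congr 1
            ring
        have h5 : -∑ i, s * |f x| ^ (s - 2) * f x * f' x i * T x i =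
            s * -((|f x| ^ (s - 2) * f x) * ∑ i, f' x i * T x i) := by
          rw [Finset.mul_sum, ← Finset.sum_neg_distrib, ← Finset.sum_neg_distrib, Finset.mul_sum]
          exact Finset.sum_congr rfl fun i _ => by ring
        change -∑ i, s * |f x| ^ (s - 2) * f x * f' x i * T x i ≤
          s * (‖WithLp.toLp 2 (f' x)‖ * (|f x| ^ (s - 1) * ‖WithLp.toLp 2 (T x)‖))
        rw [h5]
        refine mul_le_mul_of_nonneg_left ((neg_le_abs _).trans ?_) (by linarith)
        rw [abs_mul, h4, ← h3, mul_left_comm]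
        exact mul_le_mul_of_nonneg_left h2 (by positivity)
    refine h1.trans ?_
    rw [integral_const_mul]
    refine mul_le_mul_of_nonneg_left ?_ (by linarith)
    refine (integral_mul_le_Lp_mul_Lq_of_nonneg hpq
      (Eventually.of_forall fun x => norm_nonneg _)
      (Eventually.of_forall fun x => by positivity) (hmem hNc hpq.pos) (hmem hHc hq0)).trans ?_
    refine mul_le_mul_of_nonneg_left ?_ (rpow_nonneg (integral_nonneg fun x => by positivity) _)
    refine rpow_le_rpow (integral_nonneg fun x => by positivity) ?_ (by positivity)
    have h6 := hpushR hnc fun x => by positivity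
    rw [← integral_const_mul]
    simp only [← mul_assoc]
    rw [← h6]
    refine integral_mono (hgi (hHc.rpow_const fun _ => Or.inr hq0.le))
      (hgi (hFc.mul (hnc.comp hTc))) fun x => ?_
    change (|f x| ^ (s - 1) * ‖WithLp.toLp 2 (T x)‖) ^ q ≤
      (|f x| ^ r + ε) * ‖WithLp.toLp 2 (T x)‖ ^ q
    rw [mul_rpow (by positivity) (norm_nonneg _), ← rpow_mul (abs_nonneg _), hsq]
    exact mul_le_mul_of_nonneg_right (by linarith) (by positivity)
  exact (mul_le_mul_of_nonneg_left hlow hD0.le).trans (hle.trans hup)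

/-- The weighted Sobolev inequality on a box. -/
theorem sobolev_box {n : ℕ} {A a b : Fin (n + 1) → ℝ} (hab : ∀ i, a i < b i)
    (hA : ∀ i, 0 ≤ A i) (ha : ∀ i, 0 < A i → a i = 0) {D p q s r : ℝ}
    (hD : D = (n + 1 : ℕ) + ∑ i, A i) (hD1 : 1 < D) (hpq : p.HolderConjugate q)
    (hs : 1 < s) (hr : 0 < r) (hsr : s + r / D = r) (hsq : (s - 1) * q = r)
    {f : (Fin (n + 1) → ℝ) → ℝ} {f' : (Fin (n + 1) → ℝ) → Fin (n + 1) → ℝ}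
    (hf : ∀ x i, HasDerivAt (fun t => f (Function.update x i t)) (f' x i) (x i))
    (hfc : Continuous f) (hf' : Continuous f')
    (hfb : ∀ x i, x i = b i → f x = 0) (hfa : ∀ x i, A i = 0 → x i = a i → f x = 0)
    {μ : Measure (Fin (n + 1) → ℝ)}
    (hμ : μ = Measure.pi (fun i => intervalWeight (a i) (b i) (fun t => |t| ^ A i)))
    {φ : (Fin (n + 1) → ℝ) → ℝ} (hφ : φ = fun x => 1 + ‖WithLp.toLp 2 x‖ ^ q)
    (hm : 0 < ∫ x, |f x| ^ r ∂μ) :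
    D * (((∫ x, |f x| ^ r ∂μ) / ∫ x, φ x ^ (-D) ∂μ) ^ (1 - 1 / D) * ∫ x, φ x ^ (1 - D) ∂μ) ≤
      s * ((∫ x, ‖WithLp.toLp 2 (f' x)‖ ^ p ∂μ) ^ (1 / p) *
        ((∫ x, |f x| ^ r ∂μ) / (∫ x, φ x ^ (-D) ∂μ) *
          ∫ x, φ x ^ (-D) * ‖WithLp.toLp 2 x‖ ^ q ∂μ) ^ (1 / q)) := by
  have hq0 := hpq.symm.pos
  have hwc := fun i => continuous_abs_rpow (hA i)
  have hwpos := fun i => abs_rpow_pos_of_mem (b := b i) (hA i) (ha i)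
  have hfin := fun i => isFiniteMeasure_intervalWeight (a := a i) (b := b i) (hwc i)
  have hμfin : IsFiniteMeasure μ := by rw [hμ]; infer_instance
  have hφc : Continuous φ := by
    rw [hφ]
    exact continuous_const.add
      ((PiLp.continuous_toLp 2 _).norm.rpow_const fun _ => Or.inr hq0.le)
  have hφ0 (x) : 0 < φ x := by rw [hφ]; positivity
  obtain ⟨C, hC⟩ := isCompact_Icc.bddAbove_image (hφc.continuousOn (s := Icc a b))
  have hM : 0 < ∫ x, φ x ^ (-D) ∂μ := by
    rw [hμ]
    exact integral_pos_pi_intervalWeight hab hwc hwpos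
      (hφc.rpow_const fun x => Or.inl (hφ0 x).ne') fun x => rpow_pos_of_pos (hφ0 x) _
  have hFi : Integrable (fun x => |f x| ^ r) μ := by
    rw [hμ]
    exact integrable_pi_intervalWeight hwc (hfc.abs.rpow_const fun _ => Or.inr hr.le)
  set M := ∫ x, φ x ^ (-D) ∂μ
  set m := ∫ x, |f x| ^ r ∂μ
  set c : ℝ → ℝ := fun ε => (m + ε * μ.real univ) / M with hcdef
  have hc0 : c 0 = m / M := by simp [hcdef]
  have hmM : 0 < m / M := div_pos hm hM
  have hct : Tendsto c (𝓝[>] 0) (𝓝 (m / M)) := by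
    rw [← hc0]
    exact (Continuous.tendsto (by fun_prop) 0).mono_left nhdsWithin_le_nhds
  have hid : Tendsto (fun ε : ℝ => ε) (𝓝[>] 0) (𝓝 0) := nhdsWithin_le_nhds
  have hstep : ∀ᶠ ε in 𝓝[>] (0 : ℝ), D * (c ε ^ (-(1 / D)) * (c ε * (∫ x, φ x ^ (1 - D) ∂μ) -
      ε * (C * μ.real univ))) ≤ s * ((∫ x, ‖WithLp.toLp 2 (f' x)‖ ^ p ∂μ) ^ (1 / p) *
        (c ε * ∫ x, φ x ^ (-D) * ‖WithLp.toLp 2 x‖ ^ q ∂μ) ^ (1 / q)) := by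
    filter_upwards [self_mem_nhdsWithin] with ε hε
    refine sobolev_box_of_pos hab hA ha hD hD1 hpq hs hr hsr hsq hf hfc hf' hfb hfa hμ hφ
      (fun x hx => hC (mem_image_of_mem _ hx)) hε ?_
    rw [integral_add hFi (integrable_const _), integral_const, smul_eq_mul, mul_comm _ ε]
  have hlim := le_of_tendsto_of_tendsto
    (((hct.rpow_const (p := -(1 / D)) (Or.inl hmM.ne')).mul
      ((hct.mul_const _).sub (hid.mul_const _))).const_mul D)
    ((((hct.mul_const _).rpow_const (p := 1 / q) (Or.inr (by positivity))).const_mul _).const_mul s)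
    hstep
  rw [zero_mul, sub_zero, ← mul_assoc (_ ^ (-(1 / D))), ← rpow_add_one hmM.ne'] at hlim
  rwa [show (1 : ℝ) - 1 / D = -(1 / D) + 1 by ring]

lemma lintegral_pi_prod_eq_prod_lintegral {n : ℕ} (μ : Fin n → Measure ℝ)
    [∀ i, SigmaFinite (μ i)] {f : Fin n → ℝ → ENNReal} (hf : ∀ i, Measurable (f i)) :
    ∫⁻ x, ∏ i, f i (x i) ∂Measure.pi μ = ∏ i, ∫⁻ t, f i t ∂μ i := by
  induction n with
  | zero => simp
  | succ n ih =>
    rw [lintegral_pi_cons μ (Finset.measurable_prod _ fun i _ => by fun_prop), Fin.prod_univ_succ]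
    simp only [Fin.prod_univ_succ, Fin.cons_zero, Fin.cons_succ]
    have h (t : ℝ) : ∫⁻ y, f 0 t * ∏ i : Fin n, f i.succ (y i)
        ∂Measure.pi (fun j => μ j.succ) = f 0 t * ∏ i : Fin n, ∫⁻ s, f i.succ s ∂μ i.succ := by
      rw [lintegral_const_mul _ (Finset.measurable_prod _ fun i _ => by fun_prop),
        ih _ fun i => hf _]
    simp only [h]
    rw [lintegral_mul_const _ (hf 0)]

lemma pi_withDensity {n : ℕ} (μ : Fin n → Measure ℝ) [∀ i, SigmaFinite (μ i)]
    {f : Fin n → ℝ → ENNReal} (hf : ∀ i, Measurable (f i))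
    [∀ i, SigmaFinite ((μ i).withDensity (f i))] :
    Measure.pi (fun i => (μ i).withDensity (f i)) =
      (Measure.pi μ).withDensity fun x => ∏ i, f i (x i) := by
  refine Measure.pi_eq fun s hs => ?_
  rw [withDensity_apply _ (MeasurableSet.univ_pi hs), Measure.restrict_pi_pi,
    lintegral_pi_prod_eq_prod_lintegral _ hf]
  exact Finset.prod_congr rfl fun i _ => (withDensity_apply _ (hs i)).symm

/-- The factor of `ℝ^n_A` in a coordinate with exponent `α`. -/
def axisSet (α : ℝ) : Set ℝ := {t | 0 < α → 0 < t}

lemma axisSet_of_pos {α : ℝ} (h : 0 < α) : axisSet α = Ioi 0 := by simp [axisSet, h, Ioi]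

lemma axisSet_of_not_pos {α : ℝ} (h : ¬ 0 < α) : axisSet α = univ := by simp [axisSet, h]

lemma measurableSet_axisSet (α : ℝ) : MeasurableSet (axisSet α) := by
  by_cases h : 0 < α
  · rw [axisSet_of_pos h]
    exact measurableSet_Ioi
  · rw [axisSet_of_not_pos h]
    exact MeasurableSet.univ

/-- The measure `x^A dx` on `ℝ^n_A`, in product form. -/
def orthantMeasure {n : ℕ} (A : Fin n → ℝ) : Measure (Fin n → ℝ) :=
  Measure.pi fun i => (volume.restrict (axisSet (A i))).withDensity
    fun t => ENNReal.ofReal (|t| ^ A i)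

section Orthant

variable {n : ℕ} {A : Fin n → ℝ}

lemma orthantMeasure_eq (hA : ∀ i, 0 ≤ A i) :
    orthantMeasure A = (volume.restrict (univ.pi fun i => axisSet (A i))).withDensity
      fun x => ENNReal.ofReal (∏ i, |x i| ^ A i) := by
  have hm (i) := (continuous_abs_rpow (hA i)).measurable.ennreal_ofReal
  rw [orthantMeasure, pi_withDensity _ hm, volume_pi, Measure.restrict_pi_pi]
  simp only [ENNReal.ofReal_prod_of_nonneg fun i _ => rpow_nonneg (abs_nonneg _) _]

lemma lintegral_orthantMeasure (hA : ∀ i, 0 ≤ A i) (h : (Fin n → ℝ) → ENNReal) :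
    ∫⁻ x, h x ∂orthantMeasure A =
      ∫⁻ x in univ.pi fun i => axisSet (A i), ENNReal.ofReal (∏ i, |x i| ^ A i) * h x := by
  have hm : Measurable fun x : Fin n → ℝ => ENNReal.ofReal (∏ i, |x i| ^ A i) :=
    (Finset.measurable_prod _ fun i _ =>
      (continuous_abs_rpow (hA i)).measurable.comp (measurable_pi_apply i)).ennreal_ofReal
  rw [orthantMeasure_eq hA, lintegral_withDensity_eq_lintegral_mul_non_measurable _ hm
    (Eventually.of_forall fun _ => ENNReal.ofReal_lt_top)]
  rfl

lemma integral_orthantMeasure (hA : ∀ i, 0 ≤ A i) (h : (Fin n → ℝ) → ℝ) :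
    ∫ x, h x ∂orthantMeasure A =
      ∫ x in univ.pi fun i => axisSet (A i), (∏ i, |x i| ^ A i) * h x := by
  have hm : Measurable fun x : Fin n → ℝ => ENNReal.ofReal (∏ i, |x i| ^ A i) :=
    (Finset.measurable_prod _ fun i _ =>
      (continuous_abs_rpow (hA i)).measurable.comp (measurable_pi_apply i)).ennreal_ofReal
  rw [orthantMeasure_eq hA, integral_withDensity_eq_integral_toReal_smul hm
    (Eventually.of_forall fun _ => ENNReal.ofReal_lt_top)]
  refine integral_congr_ae (Eventually.of_forall fun x => ?_)
  simp only [smul_eq_mul]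
  rw [ENNReal.toReal_ofReal (Finset.prod_nonneg fun i _ => rpow_nonneg (abs_nonneg _) _)]

/-- The measure `x^A dx` is homogeneous of degree `D`. -/
lemma lintegral_orthantMeasure_comp_smul (hA : ∀ i, 0 ≤ A i) {D : ℝ} (hD : D = n + ∑ i, A i)
    {c : ℝ} (hc : 0 < c) {h : (Fin n → ℝ) → ENNReal} (hh : Measurable h) :
    ∫⁻ x, h (c • x) ∂orthantMeasure A =
      ENNReal.ofReal (c ^ (-D)) * ∫⁻ x, h x ∂orthantMeasure A := by
  have hm : Measurable fun x : Fin n → ℝ => ENNReal.ofReal (∏ i, |x i| ^ A i) :=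
    (Finset.measurable_prod _ fun i _ =>
      (continuous_abs_rpow (hA i)).measurable.comp (measurable_pi_apply i)).ennreal_ofReal
  set S : Set (Fin n → ℝ) := univ.pi fun i => axisSet (A i) with hSdef
  have hS : MeasurableSet S := MeasurableSet.univ_pi fun i => measurableSet_axisSet _
  set k : (Fin n → ℝ) → ENNReal :=
    S.indicator fun x => ENNReal.ofReal (∏ i, |x i| ^ A i) * h x with hk
  have hkm : Measurable k := (hm.mul hh).indicator hS
  have hcS (x : Fin n → ℝ) : c • x ∈ S ↔ x ∈ S := by
    simp [hSdef, axisSet, hc]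
  have hprod (x : Fin n → ℝ) : ∏ i, |(c • x) i| ^ A i = c ^ (∑ i, A i) * ∏ i, |x i| ^ A i := by
    rw [rpow_sum_of_pos hc, ← Finset.prod_mul_distrib]
    refine Finset.prod_congr rfl fun i _ => ?_
    rw [Pi.smul_apply, smul_eq_mul, abs_mul, abs_of_pos hc, mul_rpow hc.le (abs_nonneg _)]
  have h1 (x : Fin n → ℝ) : S.indicator (fun x => ENNReal.ofReal (∏ i, |x i| ^ A i) * h (c • x)) x =
      ENNReal.ofReal (c ^ (-∑ i, A i)) * k (c • x) := by
    by_cases hx : x ∈ S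
    · rw [hk, indicator_of_mem hx, indicator_of_mem ((hcS x).2 hx), hprod, ← mul_assoc,
        ← ENNReal.ofReal_mul (rpow_nonneg hc.le _), ← mul_assoc, ← rpow_add hc, neg_add_cancel,
        rpow_zero, one_mul]
    · rw [hk, indicator_of_notMem hx, indicator_of_notMem (mt (hcS x).1 hx), mul_zero]
  rw [lintegral_orthantMeasure hA, lintegral_orthantMeasure hA, ← lintegral_indicator hS,
    ← lintegral_indicator hS]
  have hkc : Measurable fun x => k (c • x) := hkm.comp (measurable_const_smul c)
  simp only [h1]
  rw [lintegral_const_mul _ hkc,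
    ← lintegral_map hkm (measurable_const_smul c), Measure.map_addHaar_smul _ hc.ne',
    lintegral_smul_measure, smul_eq_mul, ← mul_assoc, Module.finrank_fin_fun,
    abs_of_pos (by positivity), ← ENNReal.ofReal_mul (by positivity), ← rpow_natCast,
    ← rpow_neg hc.le, ← rpow_add hc, hD]
  congr 3
  ring

end Orthant

lemma lintegral_rpow_mul_exp_neg_mul_Ioi {a c : ℝ} (ha : 0 < a) (hc : 0 < c) :
    ∫⁻ t in Ioi (0 : ℝ), ENNReal.ofReal (t ^ (a - 1) * exp (-(c * t))) =
      ENNReal.ofReal (c ^ (-a) * Gamma a) := by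
  have h := integral_rpow_mul_exp_neg_mul_Ioi ha hc
  rw [one_div, inv_rpow hc.le, ← rpow_neg hc.le] at h
  have hpos : 0 < c ^ (-a) * Gamma a := mul_pos (rpow_pos_of_pos hc _) (Gamma_pos_of_pos ha)
  rw [← h, ofReal_integral_eq_lintegral_ofReal (.of_integral_ne_zero (h ▸ hpos.ne'))]
  exact (ae_restrict_mem measurableSet_Ioi).mono fun t ht =>
    mul_nonneg (rpow_nonneg (le_of_lt ht) _) (exp_pos _).le

lemma lintegral_exp_neg_Ioi (c : ℝ) :
    ∫⁻ t in Ioi c, ENNReal.ofReal (exp (-t)) = ENNReal.ofReal (exp (-c)) := by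
  have h := integral_exp_neg_Ioi c
  rw [← h, ofReal_integral_eq_lintegral_ofReal (.of_integral_ne_zero (h ▸ (exp_pos _).ne'))]
  exact Eventually.of_forall fun t => (exp_pos _).le

section Orthant

variable {n : ℕ} {A : Fin n → ℝ} {D q : ℝ}

instance sigmaFinite_orthantMeasure : SigmaFinite (orthantMeasure A) := by
  unfold orthantMeasure
  infer_instance

lemma norm_toLp_smul {c : ℝ} (hc : 0 < c) (x : Fin n → ℝ) :
    ‖WithLp.toLp 2 (c • x)‖ = c * ‖WithLp.toLp 2 x‖ := by
  rw [WithLp.toLp_smul, norm_smul, norm_eq_abs, abs_of_pos hc]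

lemma measurable_norm_toLp : Measurable fun x : Fin n → ℝ => ‖WithLp.toLp 2 x‖ :=
  (PiLp.continuous_toLp 2 _).norm.measurable

lemma orthantMeasure_ball (hA : ∀ i, 0 ≤ A i) (hD : D = n + ∑ i, A i) {r : ℝ} (hr : 0 < r) :
    orthantMeasure A {x | ‖WithLp.toLp 2 x‖ < r} =
      ENNReal.ofReal (r ^ D) * orthantMeasure A {x | ‖WithLp.toLp 2 x‖ < 1} := by
  have hm (r : ℝ) : MeasurableSet {x : Fin n → ℝ | ‖WithLp.toLp 2 x‖ < r} :=
    measurableSet_lt measurable_norm_toLp measurable_const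
  have h := lintegral_orthantMeasure_comp_smul hA hD (inv_pos.2 hr)
    ((measurable_const (a := (1 : ENNReal))).indicator (hm 1))
  rw [lintegral_indicator_const (hm 1), one_mul, inv_rpow hr.le, rpow_neg hr.le, inv_inv] at h
  rw [← h, ← one_mul (orthantMeasure A _), ← lintegral_indicator_const (hm r)]
  refine lintegral_congr fun x => ?_
  have : r⁻¹ • x ∈ {x : Fin n → ℝ | ‖WithLp.toLp 2 x‖ < 1} ↔
      x ∈ {x : Fin n → ℝ | ‖WithLp.toLp 2 x‖ < r} := by
    rw [mem_ofPred_eq, mem_ofPred_eq, norm_toLp_smul (inv_pos.2 hr), inv_mul_lt_iff₀ hr, mul_one]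
  simp only [indicator, this]

lemma lintegral_exp_neg_norm_rpow (hA : ∀ i, 0 ≤ A i) (hD : D = n + ∑ i, A i) (hD0 : 0 < D)
    (hq : 0 < q) :
    ∫⁻ x, ENNReal.ofReal (exp (-‖WithLp.toLp 2 x‖ ^ q)) ∂orthantMeasure A =
      ENNReal.ofReal (Gamma (1 + D / q)) * orthantMeasure A {x | ‖WithLp.toLp 2 x‖ < 1} := by
  have hN := measurable_norm_toLp (n := n)
  have hms : MeasurableSet {z : (Fin n → ℝ) × ℝ | ‖WithLp.toLp 2 z.1‖ ^ q < z.2} :=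
    measurableSet_lt ((hN.comp measurable_fst).pow_const q) measurable_snd
  set k : (Fin n → ℝ) → ℝ → ENNReal := fun x s =>
    {z : (Fin n → ℝ) × ℝ | ‖WithLp.toLp 2 z.1‖ ^ q < z.2}.indicator
      (fun z => ENNReal.ofReal (exp (-z.2))) (x, s) with hk
  have hkm : Measurable (Function.uncurry k) :=
    Measurable.indicator (by fun_prop) hms
  have h1 (x : Fin n → ℝ) : ENNReal.ofReal (exp (-‖WithLp.toLp 2 x‖ ^ q)) =
      ∫⁻ s in Ioi 0, k x s := by
    have hx : 0 ≤ ‖WithLp.toLp 2 x‖ ^ q := by positivity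
    rw [← lintegral_exp_neg_Ioi, ← lintegral_indicator measurableSet_Ioi,
      ← lintegral_indicator measurableSet_Ioi]
    refine lintegral_congr fun s => ?_
    by_cases hs : ‖WithLp.toLp 2 x‖ ^ q < s
    · simp [hk, indicator, hs, hx.trans_lt hs]
    · simp [hk, indicator, hs]
  have h2 : ∀ s ∈ Ioi (0 : ℝ), ∫⁻ x, k x s ∂orthantMeasure A =
      ENNReal.ofReal (s ^ (1 + D / q - 1) * exp (-(1 * s))) *
        orthantMeasure A {x | ‖WithLp.toLp 2 x‖ < 1} := by
    intro s hs
    have hs : 0 < s := hs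
    have : (fun x => k x s) = {x : Fin n → ℝ | ‖WithLp.toLp 2 x‖ < s ^ (1 / q)}.indicator
        fun _ => ENNReal.ofReal (exp (-s)) := by
      ext x
      have hiff : ‖WithLp.toLp 2 x‖ ^ q < s ↔ ‖WithLp.toLp 2 x‖ < s ^ (1 / q) := by
        rw [one_div, lt_rpow_inv_iff_of_pos (norm_nonneg _) hs.le hq]
      simp only [hk, indicator, mem_ofPred_eq, hiff]
    rw [this, lintegral_indicator_const (measurableSet_lt hN measurable_const),
      orthantMeasure_ball hA hD (rpow_pos_of_pos hs _), ← rpow_mul hs.le, ← mul_assoc,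
      ← ENNReal.ofReal_mul (exp_pos _).le, mul_comm (exp _), one_mul, add_sub_cancel_left,
      one_div_mul_eq_div]
  simp only [h1]
  rw [lintegral_lintegral_swap hkm.aemeasurable, setLIntegral_congr_fun measurableSet_Ioi h2,
    lintegral_mul_const _ (by fun_prop),
    lintegral_rpow_mul_exp_neg_mul_Ioi (by positivity) one_pos, one_rpow, one_mul]

lemma lintegral_exp_neg_mul_norm_rpow (hA : ∀ i, 0 ≤ A i) (hD : D = n + ∑ i, A i) (hq : 0 < q)
    {t : ℝ} (ht : 0 < t) :
    ∫⁻ x, ENNReal.ofReal (exp (-(t * ‖WithLp.toLp 2 x‖ ^ q))) ∂orthantMeasure A =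
      ENNReal.ofReal (t ^ (-(D / q))) *
        ∫⁻ x, ENNReal.ofReal (exp (-‖WithLp.toLp 2 x‖ ^ q)) ∂orthantMeasure A := by
  have hN := measurable_norm_toLp (n := n)
  have h := lintegral_orthantMeasure_comp_smul hA hD (rpow_pos_of_pos ht (1 / q))
    (h := fun x => ENNReal.ofReal (exp (-‖WithLp.toLp 2 x‖ ^ q))) (by fun_prop)
  rw [← rpow_mul ht.le, mul_neg, one_div_mul_eq_div] at h
  rw [← h]
  refine lintegral_congr fun x => ?_
  rw [norm_toLp_smul (rpow_pos_of_pos ht _), mul_rpow (by positivity) (norm_nonneg _),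
    ← rpow_mul ht.le, one_div_mul_cancel hq.ne', rpow_one]

lemma lintegral_one_add_norm_rpow (hA : ∀ i, 0 ≤ A i) (hD : D = n + ∑ i, A i) (hD0 : 0 < D)
    (hq : 0 < q) {z : ℝ} (hz : D / q < z) :
    ∫⁻ x, ENNReal.ofReal ((1 + ‖WithLp.toLp 2 x‖ ^ q) ^ (-z)) ∂orthantMeasure A =
      ENNReal.ofReal (Gamma (z - D / q) * Gamma (1 + D / q) / Gamma z) *
        orthantMeasure A {x | ‖WithLp.toLp 2 x‖ < 1} := by
  have hN := measurable_norm_toLp (n := n)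
  have hz0 : 0 < z := (by positivity : 0 < D / q).trans hz
  have hΓ := Gamma_pos_of_pos hz0
  have h1 (x : Fin n → ℝ) : ENNReal.ofReal ((1 + ‖WithLp.toLp 2 x‖ ^ q) ^ (-z)) =
      ∫⁻ t in Ioi 0, ENNReal.ofReal (Gamma z)⁻¹ *
        ENNReal.ofReal (t ^ (z - 1) * exp (-((1 + ‖WithLp.toLp 2 x‖ ^ q) * t))) := by
    rw [lintegral_const_mul _ (by fun_prop), lintegral_rpow_mul_exp_neg_mul_Ioi hz0
      (by positivity), ← ENNReal.ofReal_mul (by positivity)]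
    congr 1
    field_simp
  have h2 : ∀ t ∈ Ioi (0 : ℝ), ∫⁻ x, ENNReal.ofReal (Gamma z)⁻¹ *
        ENNReal.ofReal (t ^ (z - 1) * exp (-((1 + ‖WithLp.toLp 2 x‖ ^ q) * t)))
          ∂orthantMeasure A =
      ENNReal.ofReal (t ^ (z - D / q - 1) * exp (-(1 * t))) * (ENNReal.ofReal (Gamma z)⁻¹ *
        ∫⁻ x, ENNReal.ofReal (exp (-‖WithLp.toLp 2 x‖ ^ q)) ∂orthantMeasure A) := by
    intro t ht
    have ht : 0 < t := ht
    have h3 (x : Fin n → ℝ) :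
        ENNReal.ofReal (t ^ (z - 1) * exp (-((1 + ‖WithLp.toLp 2 x‖ ^ q) * t))) =
        ENNReal.ofReal (t ^ (z - 1) * exp (-(1 * t))) *
          ENNReal.ofReal (exp (-(t * ‖WithLp.toLp 2 x‖ ^ q))) := by
      rw [← ENNReal.ofReal_mul (by positivity), mul_assoc, ← exp_add]
      congr 3
      ring
    simp only [h3]
    rw [lintegral_const_mul _ (by fun_prop), lintegral_const_mul _ (by fun_prop),
      lintegral_exp_neg_mul_norm_rpow hA hD hq ht, ← mul_assoc (ENNReal.ofReal (_ * _)),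
      ← ENNReal.ofReal_mul (by positivity), mul_right_comm, ← rpow_add ht, ← mul_assoc,
      ← mul_assoc, mul_comm (ENNReal.ofReal (Gamma z)⁻¹)]
    congr 5
    ring
  simp only [h1]
  rw [lintegral_lintegral_swap (Measurable.aemeasurable (by fun_prop)),
    setLIntegral_congr_fun measurableSet_Ioi h2,
    lintegral_mul_const _ (by fun_prop),
    lintegral_rpow_mul_exp_neg_mul_Ioi (by linarith) one_pos, one_rpow, one_mul,
    lintegral_exp_neg_norm_rpow hA hD hD0 hq, ← mul_assoc, ← mul_assoc,
    ← ENNReal.ofReal_mul (Gamma_pos_of_pos (by linarith)).le,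
    ← ENNReal.ofReal_mul (mul_pos (Gamma_pos_of_pos (by linarith)) (inv_pos.2 hΓ)).le]
  congr 2
  field_simp

lemma lintegral_exp_neg_sq_axis {α : ℝ} (hα : 0 ≤ α) :
    ∫⁻ t, ENNReal.ofReal (exp (-t ^ 2)) ∂(volume.restrict (axisSet α)).withDensity
        (fun t => ENNReal.ofReal (|t| ^ α)) =
      ENNReal.ofReal (Gamma ((α + 1) / 2) * if 0 < α then 1 / 2 else 1) := by
  rw [lintegral_withDensity_eq_lintegral_mul_non_measurable _
    (continuous_abs_rpow hα).measurable.ennreal_ofReal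
    (Eventually.of_forall fun _ => ENNReal.ofReal_lt_top)]
  simp only [Pi.mul_apply, ← ENNReal.ofReal_mul (rpow_nonneg (abs_nonneg _) _)]
  have hΓ : 0 < Gamma ((α + 1) / 2) := Gamma_pos_of_pos (by positivity)
  by_cases h : 0 < α
  · rw [axisSet_of_pos h, if_pos h]
    have h1 := integral_rpow_mul_exp_neg_rpow two_pos (by linarith : -1 < α)
    rw [mul_comm, ← h1, ofReal_integral_eq_lintegral_ofReal]
    · refine setLIntegral_congr_fun measurableSet_Ioi fun t ht => ?_
      simp only [abs_of_pos (mem_Ioi.1 ht), rpow_two]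
    · exact .of_integral_ne_zero (h1 ▸ by positivity)
    · exact (ae_restrict_mem measurableSet_Ioi).mono fun t ht =>
        mul_nonneg (rpow_nonneg (le_of_lt ht) _) (exp_pos _).le
  · have h0 : α = 0 := le_antisymm (not_lt.1 h) hα
    rw [axisSet_of_not_pos h, if_neg h, h0, Measure.restrict_univ, mul_one, zero_add,
      Gamma_one_half_eq]
    have h1 := integral_gaussian 1
    rw [div_one] at h1
    rw [← h1, ofReal_integral_eq_lintegral_ofReal]
    · simp
    · exact .of_integral_ne_zero (h1 ▸ by positivity)
    · exact Eventually.of_forall fun t => (exp_pos _).le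

lemma lintegral_exp_neg_norm_sq (hA : ∀ i, 0 ≤ A i) :
    ∫⁻ x, ENNReal.ofReal (exp (-‖WithLp.toLp 2 x‖ ^ (2 : ℝ))) ∂orthantMeasure A =
      ENNReal.ofReal ((∏ i, Gamma ((A i + 1) / 2)) / 2 ^ monK A) := by
  have h1 (x : Fin n → ℝ) : ENNReal.ofReal (exp (-‖WithLp.toLp 2 x‖ ^ (2 : ℝ))) =
      ∏ i, ENNReal.ofReal (exp (-x i ^ 2)) := by
    rw [← ENNReal.ofReal_prod_of_nonneg fun i _ => (exp_pos _).le, ← exp_sum, rpow_two,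
      EuclideanSpace.norm_sq_eq, Finset.sum_neg_distrib]
    simp
  simp only [h1]
  rw [orthantMeasure, lintegral_pi_prod_eq_prod_lintegral _
    (f := fun _ t => ENNReal.ofReal (exp (-t ^ 2))) fun i => by fun_prop]
  simp only [fun i => lintegral_exp_neg_sq_axis (hA i)]
  have hΓ (i) : 0 < Gamma ((A i + 1) / 2) :=
    Gamma_pos_of_pos (by linarith [hA i])
  rw [← ENNReal.ofReal_prod_of_nonneg fun i _ => mul_nonneg (hΓ i).le (by split_ifs <;> norm_num),
    Finset.prod_mul_distrib, Finset.prod_ite, Finset.prod_const, Finset.prod_const_one, mul_one,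
    div_pow, one_pow, mul_one_div, monK, Nat.card_eq_fintype_card, Fintype.card_subtype]

/-- The weighted volume of the unit ball in `ℝ^n_A`. -/
def orthantBall (A : Fin n → ℝ) : ℝ :=
  (∏ i, Gamma ((A i + 1) / 2)) / 2 ^ monK A / Gamma (1 + monDim A / 2)

lemma monDim_fin (A : Fin n → ℝ) : monDim A = n + ∑ i, A i := by simp [monDim]

lemma orthantBall_pos (hA : ∀ i, 0 ≤ A i) : 0 < orthantBall A := by
  have hΓ (i) : 0 < Gamma ((A i + 1) / 2) := Gamma_pos_of_pos (by linarith [hA i])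
  have hD : 0 ≤ monDim A := by
    rw [monDim_fin]
    exact add_nonneg n.cast_nonneg (Finset.sum_nonneg fun i _ => hA i)
  exact div_pos (div_pos (Finset.prod_pos fun i _ => hΓ i) (by positivity))
    (Gamma_pos_of_pos (by positivity))

lemma orthantMeasure_unit_ball (hA : ∀ i, 0 ≤ A i) (hD0 : 0 < monDim A) :
    orthantMeasure A {x | ‖WithLp.toLp 2 x‖ < 1} = ENNReal.ofReal (orthantBall A) := by
  have hΓ : 0 < Gamma (1 + monDim A / 2) := Gamma_pos_of_pos (by positivity)
  have h := lintegral_exp_neg_norm_rpow hA (monDim_fin A) hD0 two_pos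
  rw [lintegral_exp_neg_norm_sq hA, mul_comm] at h
  rw [orthantBall, ENNReal.ofReal_div_of_pos hΓ, h,
    ENNReal.mul_div_cancel_right (by simpa using hΓ) (by simp)]

end Orthant

section Constants

variable {n : ℕ} {A : Fin n → ℝ} {p q : ℝ}

lemma monC1_eq (hA : ∀ i, 0 ≤ A i) :
    monC1 A = (monDim A)⁻¹ * orthantBall A ^ (-(1 / monDim A)) := by
  rw [monC1, rpow_neg (orthantBall_pos hA).le, ← inv_rpow (orthantBall_pos hA).le, orthantBall,
    div_div, inv_div]

/-- The weighted integral of `(1 + |x|^q)^{-D}`, which determines the sharp constant. -/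
def bubbleMass (A : Fin n → ℝ) (p q : ℝ) : ℝ :=
  Gamma (monDim A / p) * Gamma (1 + monDim A / q) / Gamma (monDim A) * orthantBall A

lemma bubbleMass_pos (hA : ∀ i, 0 ≤ A i) (hD : 0 < monDim A) (hpq : p.HolderConjugate q) :
    0 < bubbleMass A p q := by
  have hp := hpq.pos
  have hq := hpq.symm.pos
  exact mul_pos (div_pos (mul_pos (Gamma_pos_of_pos (by positivity))
    (Gamma_pos_of_pos (by positivity))) (Gamma_pos_of_pos hD)) (orthantBall_pos hA)

lemma monCp_eq (hA : ∀ i, 0 ≤ A i) (hp : 1 < p) (hpD : p < monDim A) (hq : q = p / (p - 1)) :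
    monCp A p = (monDim A)⁻¹ * ((monDim A * (p - 1) / (monDim A - p)) ^ (1 / q) *
      bubbleMass A p q ^ (-(1 / monDim A))) := by
  have hp0 : 0 < p := by linarith
  have hp1 : 0 < p - 1 := by linarith
  have hD : 0 < monDim A := by linarith
  have hDp : 0 < monDim A - p := by linarith
  have hq0 : 0 < q := by rw [hq]; positivity
  have hB := orthantBall_pos hA
  have h1 : 0 < Gamma (monDim A) := Gamma_pos_of_pos hD
  have h2 : 0 < Gamma (monDim A / p) := Gamma_pos_of_pos (by positivity)
  have h3 : 0 < Gamma (monDim A / q) := Gamma_pos_of_pos (by positivity)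
  have h4 : Gamma (1 + monDim A / q) = monDim A / q * Gamma (monDim A / q) := by
    rw [add_comm, Gamma_add_one (by positivity)]
  have h5 : 1 - 1 / p - 1 / monDim A = 1 / q - 1 / monDim A := by
    rw [hq]
    field_simp
  have h6 : bubbleMass A p q = (orthantBall A * monDim A) *
      (q * Gamma (monDim A) / (Gamma (monDim A / p) * Gamma (monDim A / q)))⁻¹ := by
    rw [bubbleMass, h4]
    field_simp
  rw [monCp, if_neg hp.ne', ← hq, monC1_eq hA, h5, h6]
  have h7 : 0 < q * Gamma (monDim A) / (Gamma (monDim A / p) * Gamma (monDim A / q)) := by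
    positivity
  generalize q * Gamma (monDim A) / (Gamma (monDim A / p) * Gamma (monDim A / q)) = z at h7 ⊢
  rw [mul_div_assoc (monDim A) (p - 1), mul_rpow hD.le (div_pos hp1 hDp).le,
    mul_rpow (mul_pos hB hD).le (inv_pos.2 h7).le, mul_rpow hB.le hD.le, inv_rpow h7.le,
    rpow_neg h7.le, inv_inv, sub_eq_add_neg (1 / q), rpow_add hD]
  ring

end Constants

section Bubble

variable {n : ℕ} {A : Fin n → ℝ} {p q : ℝ}

lemma integral_one_add_norm_rpow (hA : ∀ i, 0 ≤ A i) (hD : 0 < monDim A) (hq : 0 < q) {z : ℝ}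
    (hz : monDim A / q < z) :
    Integrable (fun x => (1 + ‖WithLp.toLp 2 x‖ ^ q) ^ (-z)) (orthantMeasure A) ∧
    ∫ x, (1 + ‖WithLp.toLp 2 x‖ ^ q) ^ (-z) ∂orthantMeasure A =
      Gamma (z - monDim A / q) * Gamma (1 + monDim A / q) / Gamma z * orthantBall A := by
  have hN := measurable_norm_toLp (n := n)
  have hz0 : 0 < z := (by positivity : 0 < monDim A / q).trans hz
  have hpos : 0 ≤ Gamma (z - monDim A / q) * Gamma (1 + monDim A / q) / Gamma z :=
    div_nonneg (mul_nonneg (Gamma_pos_of_pos (by linarith)).le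
      (Gamma_pos_of_pos (by positivity)).le) (Gamma_pos_of_pos hz0).le
  have h := lintegral_one_add_norm_rpow hA (monDim_fin A) hD hq hz
  rw [orthantMeasure_unit_ball hA hD, ← ENNReal.ofReal_mul hpos] at h
  have hm : AEStronglyMeasurable (fun x : Fin n → ℝ => (1 + ‖WithLp.toLp 2 x‖ ^ q) ^ (-z))
      (orthantMeasure A) := Measurable.aestronglyMeasurable (by fun_prop)
  have h0 : 0 ≤ᵐ[orthantMeasure A] fun x : Fin n → ℝ => (1 + ‖WithLp.toLp 2 x‖ ^ q) ^ (-z) :=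
    Eventually.of_forall fun x => by positivity
  refine ⟨⟨hm, ?_⟩, ?_⟩
  · rw [hasFiniteIntegral_iff_ofReal h0, h]
    exact ENNReal.ofReal_lt_top
  · rw [integral_eq_lintegral_of_nonneg_ae h0 hm, h,
      ENNReal.toReal_ofReal (mul_nonneg hpos (orthantBall_pos hA).le)]

lemma integral_bubble (hA : ∀ i, 0 ≤ A i) (hpD : p < monDim A) (hpq : p.HolderConjugate q)
    {φ : (Fin n → ℝ) → ℝ} (hφ : φ = fun x => 1 + ‖WithLp.toLp 2 x‖ ^ q) {s : ℝ}
    (hs : s = p * (monDim A - 1) / (monDim A - p)) :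
    Integrable (fun x => φ x ^ (-monDim A)) (orthantMeasure A) ∧
    Integrable (fun x => φ x ^ (1 - monDim A)) (orthantMeasure A) ∧
    Integrable (fun x => φ x ^ (-monDim A) * ‖WithLp.toLp 2 x‖ ^ q) (orthantMeasure A) ∧
    ∫ x, φ x ^ (-monDim A) ∂orthantMeasure A = bubbleMass A p q ∧
    ∫ x, φ x ^ (1 - monDim A) ∂orthantMeasure A = s * bubbleMass A p q ∧
    ∫ x, φ x ^ (-monDim A) * ‖WithLp.toLp 2 x‖ ^ q ∂orthantMeasure A =
      (s - 1) * bubbleMass A p q := by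
  have hp0 := hpq.pos
  have hp1 := hpq.lt
  have hq0 := hpq.symm.pos
  have hD : 0 < monDim A := by linarith
  have hDq : monDim A - monDim A / q = monDim A / p := by
    have := hpq.inv_add_inv_eq_one
    rw [div_eq_mul_inv, div_eq_mul_inv]
    linear_combination (-monDim A) * this
  have hp1' : 1 < monDim A / p := by rwa [one_lt_div hp0]
  obtain ⟨h1, h2⟩ := integral_one_add_norm_rpow hA hD hq0 (z := monDim A)
    (by have : 0 < monDim A / p := by positivity
        linarith)
  obtain ⟨h3, h4⟩ := integral_one_add_norm_rpow hA hD hq0 (z := monDim A - 1) (by linarith)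
  have hφ' : (fun x : Fin n → ℝ => φ x ^ (-monDim A) * ‖WithLp.toLp 2 x‖ ^ q) =
      fun x => φ x ^ (1 - monDim A) - φ x ^ (-monDim A) := by
    ext x
    have : 0 < φ x := by rw [hφ]; positivity
    rw [sub_eq_add_neg 1, add_comm 1, rpow_add_one this.ne', hφ]
    ring
  have hDp : monDim A - p ≠ 0 := by linarith
  rw [hφ']
  simp only [hφ]
  rw [neg_sub] at h3 h4
  have h5 : ∫ x, (1 + ‖WithLp.toLp 2 x‖ ^ q) ^ (1 - monDim A) ∂orthantMeasure A =
      s * bubbleMass A p q := by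
    have hg1 : Gamma (monDim A) = (monDim A - 1) * Gamma (monDim A - 1) := by
      conv_lhs => rw [← sub_add_cancel (monDim A) 1]
      exact Gamma_add_one (by linarith)
    have hg2 : Gamma (monDim A / p) = (monDim A / p - 1) * Gamma (monDim A / p - 1) := by
      conv_lhs => rw [← sub_add_cancel (monDim A / p) 1]
      exact Gamma_add_one (by linarith)
    have hD1 : monDim A - 1 ≠ 0 := by linarith
    rw [h4, bubbleMass, hg1, hg2, hs, sub_right_comm, hDq]
    have : 0 < Gamma (monDim A - 1) := Gamma_pos_of_pos (by linarith)
    field_simp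
  have h6 : ∫ x, (1 + ‖WithLp.toLp 2 x‖ ^ q) ^ (-monDim A) ∂orthantMeasure A =
      bubbleMass A p q := by rw [h2, hDq, bubbleMass]
  refine ⟨h1, h3, h3.sub h1, h6, h5, ?_⟩
  rw [integral_sub h3 h1, h5, h6]
  ring

end Bubble

section Exhaustion

variable {n : ℕ} {A : Fin n → ℝ}

lemma ae_mem_orthant : ∀ᵐ x ∂orthantMeasure A, ∀ i, x i ∈ axisSet (A i) := by
  unfold orthantMeasure
  rw [ae_all_iff]
  intro i
  exact (Measure.tendsto_eval_ae_ae (i := i)).eventually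
    ((withDensity_absolutelyContinuous _ _).ae_le (ae_restrict_mem (measurableSet_axisSet _)))

/-- The lower end of the side of the exhausting box of size `R`. -/
def boxLower (A : Fin n → ℝ) (R : ℝ) (i : Fin n) : ℝ := if 0 < A i then 0 else -R

lemma mem_box {x : Fin n → ℝ} (hx : ∀ i, x i ∈ axisSet (A i)) {R : ℝ} (hR : ∀ i, |x i| < R) :
    x ∈ univ.pi fun i => Ioo (boxLower A R i) R := by
  intro i _
  have := abs_lt.1 (hR i)
  change x i ∈ Ioo (if 0 < A i then 0 else -R) R
  split_ifs with h
  exacts [⟨hx i h, this.2⟩, this]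

lemma aecover_box :
    AECover (orthantMeasure A) atTop fun R : ℝ => univ.pi fun i => Ioo (boxLower A R i) R where
  ae_eventually_mem := by
    filter_upwards [ae_mem_orthant] with x hx
    filter_upwards [eventually_all.2 fun i => eventually_gt_atTop |x i|] with R hR
    exact mem_box hx hR
  measurableSet _ := MeasurableSet.univ_pi fun _ => measurableSet_Ioo

lemma pi_intervalWeight_box (R : ℝ) :
    Measure.pi (fun i => intervalWeight (boxLower A R i) R fun t => |t| ^ A i) =
      (orthantMeasure A).restrict (univ.pi fun i => Ioo (boxLower A R i) R) := by
  unfold orthantMeasure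
  rw [Measure.restrict_pi_pi]
  congr 1
  ext1 i
  rw [restrict_withDensity measurableSet_Ioo, Measure.restrict_restrict measurableSet_Ioo,
    intervalWeight, inter_eq_left.2]
  intro t ht h
  rw [boxLower, if_pos h] at ht
  exact ht.1

lemma setIntegral_box_eq {R : ℝ} {h : (Fin n → ℝ) → ℝ} (hh : ∀ x i, R ≤ |x i| → h x = 0) :
    ∫ x in univ.pi fun i => Ioo (boxLower A R i) R, h x ∂orthantMeasure A =
      ∫ x, h x ∂orthantMeasure A := by
  refine setIntegral_eq_integral_of_ae_compl_eq_zero ?_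
  filter_upwards [ae_mem_orthant] with x hx hxR
  by_contra hne
  exact hxR (mem_box hx fun i => not_le.1 fun hi => hne (hh x i hi))

end Exhaustion

/-- The sharp weighted Sobolev inequality for `1 < p < D`, in coordinates. -/
theorem sobolev_orthant {n : ℕ} {A : Fin (n + 1) → ℝ} (hA : ∀ i, 0 ≤ A i) {p : ℝ} (hp : 1 < p)
    (hpD : p < monDim A) {f : (Fin (n + 1) → ℝ) → ℝ}
    {f' : (Fin (n + 1) → ℝ) → Fin (n + 1) → ℝ}
    (hf : ∀ x i, HasDerivAt (fun t => f (Function.update x i t)) (f' x i) (x i))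
    (hfc : Continuous f) (hf' : Continuous f') {R₀ : ℝ}
    (hf0 : ∀ x i, R₀ ≤ |x i| → f x = 0) (hf'0 : ∀ x i, R₀ ≤ |x i| → f' x = 0) :
    (∫ x, |f x| ^ (monDim A * p / (monDim A - p)) ∂orthantMeasure A) ^
        ((monDim A - p) / (monDim A * p)) ≤
      monCp A p * (∫ x, ‖WithLp.toLp 2 (f' x)‖ ^ p ∂orthantMeasure A) ^ (1 / p) := by
  set q := p / (p - 1) with hq
  set D := monDim A with hD
  set r := D * p / (D - p) with hr
  set s := p * (D - 1) / (D - p) with hs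
  have hpq : p.HolderConjugate q := .conjExponent hp
  have hp0 := hpq.pos
  have hq0 := hpq.symm.pos
  have hDp : 0 < D - p := by linarith
  have hp1 : 0 < p - 1 := by linarith
  have hD0 : 0 < D := by linarith
  have hr0 : 0 < r := by positivity
  have hs1' : s - 1 = D * (p - 1) / (D - p) := by
    rw [hs]
    field_simp
    ring
  have hs1 : 0 < s - 1 := by rw [hs1']; positivity
  have hsr : s + r / D = r := by
    rw [hs, hr]
    field_simp
    ring
  have hsq : (s - 1) * q = r := by
    rw [hs1', hq, hr]
    field_simp
  have hM0 : 0 < bubbleMass A p q := bubbleMass_pos hA hD0 hpq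
  have hC : monCp A p = D⁻¹ * ((s - 1) ^ (1 / q) * bubbleMass A p q ^ (-(1 / D))) := by
    rw [monCp_eq hA hp hpD hq, hs1']
  have hm0 : 0 ≤ ∫ x, |f x| ^ r ∂orthantMeasure A := integral_nonneg fun x => by positivity
  have hN0 : 0 ≤ ∫ x, ‖WithLp.toLp 2 (f' x)‖ ^ p ∂orthantMeasure A :=
    integral_nonneg fun x => by positivity
  rcases hm0.eq_or_lt with hm | hm
  · rw [← hm, zero_rpow (by positivity), hC]
    exact mul_nonneg (by positivity) (rpow_nonneg hN0 _)
  obtain ⟨hi1, hi2, hi3, hv1, hv2, hv3⟩ := integral_bubble hA hpD hpq rfl hs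
  set φ : (Fin (n + 1) → ℝ) → ℝ := fun x => 1 + ‖WithLp.toLp 2 x‖ ^ q with hφ
  set box : ℝ → Set (Fin (n + 1) → ℝ) := fun R => univ.pi fun i => Ioo (boxLower A R i) R
  set ν := orthantMeasure A
  have hbox : ∀ᶠ R in atTop,
      D * (((∫ x, |f x| ^ r ∂ν) / ∫ x in box R, φ x ^ (-D) ∂ν) ^ (1 - 1 / D) *
        ∫ x in box R, φ x ^ (1 - D) ∂ν) ≤
      s * ((∫ x, ‖WithLp.toLp 2 (f' x)‖ ^ p ∂ν) ^ (1 / p) *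
        ((∫ x, |f x| ^ r ∂ν) / (∫ x in box R, φ x ^ (-D) ∂ν) *
          ∫ x in box R, φ x ^ (-D) * ‖WithLp.toLp 2 x‖ ^ q ∂ν) ^ (1 / q)) := by
    filter_upwards [eventually_ge_atTop R₀, eventually_gt_atTop 0] with R hR hR0
    have hz1 := setIntegral_box_eq (A := A) (R := R) (h := fun x => |f x| ^ r) fun x i h => by
      rw [hf0 x i (hR.trans h), abs_zero, zero_rpow hr0.ne']
    have hz2 := setIntegral_box_eq (A := A) (R := R) (h := fun x => ‖WithLp.toLp 2 (f' x)‖ ^ p)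
      fun x i h => by
        rw [hf'0 x i (hR.trans h), WithLp.toLp_zero, norm_zero, zero_rpow hp0.ne']
    rw [← hz1, ← hz2]
    refine sobolev_box (a := boxLower A R) (b := fun _ => R) (fun i => ?_) hA
      (fun i h => if_pos h) (monDim_fin A) (by linarith) hpq (by linarith) hr0 hsr hsq hf hfc hf'
      (fun x i h => hf0 x i ?_) (fun x i hAi h => hf0 x i ?_) (pi_intervalWeight_box R).symm hφ
      (by rw [hz1]; exact hm)
    · unfold boxLower
      split_ifs <;> linarith
    · rw [h, abs_of_pos hR0]
      exact hR
    · rw [h, boxLower, if_neg hAi.not_gt, abs_neg, abs_of_pos hR0]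
      exact hR
  have ht1 := aecover_box.integral_tendsto_of_countably_generated hi1
  have ht2 := aecover_box.integral_tendsto_of_countably_generated hi2
  have ht3 := aecover_box.integral_tendsto_of_countably_generated hi3
  rw [hv1] at ht1
  rw [hv2] at ht2
  rw [hv3] at ht3
  set M := bubbleMass A p q
  set m := ∫ x, |f x| ^ r ∂ν
  set N := ∫ x, ‖WithLp.toLp 2 (f' x)‖ ^ p ∂ν
  have hmM := div_pos hm hM0
  have hmt := (tendsto_const_nhds (x := m)).div ht1 hM0.ne'
  have hlim := le_of_tendsto_of_tendsto
    (((hmt.rpow_const (p := 1 - 1 / D) (Or.inl hmM.ne')).mul ht2).const_mul D)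
    ((((hmt.mul ht3).rpow_const (p := 1 / q) (Or.inr (by positivity))).const_mul
      (N ^ (1 / p))).const_mul s) hbox
  have hs0 : 0 < s := by linarith
  have hexp : (D - p) / (D * p) = 1 - 1 / D - 1 / q := by
    rw [hq]
    field_simp
    ring
  have e1 : m / M * ((s - 1) * M) = m * (s - 1) := by field_simp
  rw [e1, div_rpow hm.le hM0.le, mul_rpow hm.le hs1.le, rpow_sub hM0, rpow_one] at hlim
  rw [hexp, rpow_sub hm, hC, rpow_neg hM0.le, div_le_iff₀ (rpow_pos_of_pos hm _)]
  have hMD : 0 < M ^ (1 / D) := rpow_pos_of_pos hM0 _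
  have e2 : D * (m ^ (1 - 1 / D) / (M / M ^ (1 / D)) * (s * M)) =
      s * (D * M ^ (1 / D)) * m ^ (1 - 1 / D) := by field_simp
  rw [e2, mul_assoc, mul_le_mul_iff_right₀ hs0, ← le_div_iff₀' (by positivity)] at hlim
  refine hlim.trans_eq ?_
  field_simp

lemma tendsto_setIntegral_rpow_mul {E α : Type*} [TopologicalSpace E] [T2Space E]
    [MeasurableSpace E] [OpensMeasurableSpace E] {μ : Measure E} [IsFiniteMeasureOnCompacts μ]
    {l : Filter α} [l.IsCountablyGenerated] {g w : E → ℝ} (hg : Continuous g)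
    (hgs : HasCompactSupport g) (hg0 : ∀ x, 0 ≤ g x) (hw : Continuous w) (S : Set E)
    {r : α → ℝ} {r₀ : ℝ} (hr : Tendsto r l (𝓝 r₀)) (hr₀ : 0 < r₀) :
    Tendsto (fun t => ∫ x in S, g x ^ r t * w x ∂μ) l (𝓝 (∫ x in S, g x ^ r₀ * w x ∂μ)) := by
  have hK : IsCompact (tsupport g) := hgs
  have hr1 : ∀ᶠ t in l, 0 < r t ∧ r t < r₀ + 1 :=
    hr.eventually (Ioo_mem_nhds hr₀ (by linarith))
  have hc (s : ℝ) (hs : 0 < s) : Continuous fun x => g x ^ s * w x :=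
    (hg.rpow_const fun _ => Or.inr hs.le).mul hw
  refine tendsto_integral_filter_of_dominated_convergence
    ((tsupport g).indicator fun x => (1 + g x) ^ (r₀ + 1) * |w x|) ?_ ?_ ?_ ?_
  · filter_upwards [hr1] with t ht
    have h0 : Function.support (fun x => g x ^ r t * w x) ⊆ tsupport g := fun x hx => by
      by_contra h
      simp [image_eq_zero_of_notMem_tsupport h, zero_rpow ht.1.ne'] at hx
    have h1 := ((hc _ ht.1).continuousOn.integrableOn_compact hK (μ := μ)).integrable_indicator
      (isClosed_tsupport g).measurableSet
    rw [indicator_eq_self.2 h0] at h1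
    exact h1.1.restrict
  · filter_upwards [hr1] with t ht
    refine Eventually.of_forall fun x => ?_
    by_cases h : x ∈ tsupport g
    · rw [indicator_of_mem h, norm_mul, norm_eq_abs, norm_eq_abs,
        abs_of_nonneg (rpow_nonneg (hg0 x) _)]
      refine mul_le_mul_of_nonneg_right ?_ (abs_nonneg _)
      have := hg0 x
      exact (rpow_le_rpow this (by linarith) ht.1.le).trans
        (rpow_le_rpow_of_exponent_le (by linarith) ht.2.le)
    · simp [h, image_eq_zero_of_notMem_tsupport h, zero_rpow ht.1.ne']
  · refine Integrable.integrableOn ?_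
    refine IntegrableOn.integrable_indicator ?_ (isClosed_tsupport g).measurableSet
    exact (((continuous_const.add hg).rpow_const fun x => Or.inr (by linarith)).mul
      hw.abs).continuousOn.integrableOn_compact hK
  · exact Eventually.of_forall fun x =>
      ((tendsto_const_nhds (x := g x)).rpow hr (Or.inr hr₀)).mul_const _

section Euclidean

variable {n : ℕ} {A : Fin n → ℝ}

lemma continuous_monWeight (hA : ∀ i, 0 ≤ A i) : Continuous (monWeight A) :=
  continuous_finsetProd _ fun i _ =>
    (continuous_abs_rpow (hA i)).comp (PiLp.continuous_apply 2 _ i)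

lemma setIntegral_monSet (hA : ∀ i, 0 ≤ A i) (h : EuclideanSpace ℝ (Fin n) → ℝ) :
    ∫ x in monSet A, h x * monWeight A x = ∫ x, h (WithLp.toLp 2 x) ∂orthantMeasure A := by
  rw [integral_orthantMeasure hA, ← (PiLp.volume_preserving_toLp (Fin n)).setIntegral_preimage_emb
    (MeasurableEquiv.toLp 2 (Fin n → ℝ)).measurableEmbedding]
  have : WithLp.toLp 2 ⁻¹' monSet A = univ.pi fun i => axisSet (A i) := by
    ext x
    simp [monSet, axisSet]
  rw [this]
  simp only [monWeight, mul_comm]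

lemma sobolev_of_one_lt (hA : ∀ i, 0 ≤ A i) {p : ℝ} (hp : 1 < p) (hpD : p < monDim A)
    {f : EuclideanSpace ℝ (Fin n) → ℝ} (hf : ContDiff ℝ 1 f) (hs : HasCompactSupport f) :
    (∫ x in monSet A, |f x| ^ (monDim A * p / (monDim A - p)) * monWeight A x) ^
        ((monDim A - p) / (monDim A * p)) ≤
      monCp A p * (∫ x in monSet A, ‖fderiv ℝ f x‖ ^ p * monWeight A x) ^ (1 / p) := by
  obtain _ | m := n
  · simp [monDim] at hpD
    linarith
  have hc := hf.continuous_fderiv one_ne_zero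
  rw [setIntegral_monSet hA fun x => |f x| ^ (monDim A * p / (monDim A - p)),
    setIntegral_monSet hA fun x => ‖fderiv ℝ f x‖ ^ p]
  obtain ⟨R, hR⟩ := (hs : IsCompact (tsupport f)).isBounded.exists_norm_le
  have h0 (x : Fin (m + 1) → ℝ) (i) (h : R + 1 ≤ |x i|) : WithLp.toLp 2 x ∉ tsupport f := by
    intro hx
    have h1 := PiLp.norm_apply_le (WithLp.toLp 2 x) i
    have h2 := hR _ hx
    simp only [norm_eq_abs] at h1
    linarith
  have hg (x) : ‖gradient f x‖ = ‖fderiv ℝ f x‖ := LinearIsometryEquiv.norm_map _ _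
  simp only [← hg]
  refine sobolev_orthant hA hp hpD (f := fun x => f (WithLp.toLp 2 x))
    (f' := fun x => WithLp.ofLp (gradient f (WithLp.toLp 2 x))) (R₀ := R + 1) (fun x i => ?_)
    (by fun_prop) ?_ (fun x i h => image_eq_zero_of_notMem_tsupport (h0 x i h)) (fun x i h => ?_)
  · have h1 := (hf.differentiable one_ne_zero).differentiableAt (x := WithLp.toLp 2 x)
    have h2 : HasDerivAt (fun t => WithLp.toLp 2 (Function.update x i t))
        (EuclideanSpace.single i (1 : ℝ)) (x i) :=
      (PiLp.continuousLinearEquiv 2 ℝ fun _ : Fin (m + 1) => ℝ).symm.hasFDerivAt.comp_hasDerivAt _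
        (hasDerivAt_update x i (x i))
    have h3 : HasFDerivAt f (fderiv ℝ f (WithLp.toLp 2 x))
        (WithLp.toLp 2 (Function.update x i (x i))) := by
      simpa using h1.hasFDerivAt
    refine (h3.comp_hasDerivAt _ h2).congr_deriv ?_
    have : inner ℝ (gradient f (WithLp.toLp 2 x)) (EuclideanSpace.single i (1 : ℝ)) =
        fderiv ℝ f (WithLp.toLp 2 x) (EuclideanSpace.single i (1 : ℝ)) :=
      InnerProductSpace.toDual_symm_apply
    rw [← this, EuclideanSpace.inner_single_right]
    simp
  · have : Continuous (gradient f) := (InnerProductSpace.toDual ℝ _).symm.continuous.comp hc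
    fun_prop
  · have : fderiv ℝ f (WithLp.toLp 2 x) = 0 :=
      image_eq_zero_of_notMem_tsupport fun h' => h0 x i h (tsupport_fderiv_subset ℝ h')
    simp [gradient, this]

lemma tendsto_monCp (hA : ∀ i, 0 ≤ A i) (hD : 1 < monDim A) :
    Tendsto (monCp A) (𝓝[>] 1) (𝓝 (monCp A 1)) := by
  have h1 : ∀ᶠ p : ℝ in 𝓝[>] 1, 1 < p ∧ p < monDim A := Ioo_mem_nhdsGT hD
  have hD0 : 0 < monDim A := by linarith
  have hid : Tendsto (fun p : ℝ => p) (𝓝[>] 1) (𝓝 1) := tendsto_id.mono_left nhdsWithin_le_nhds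
  have hsub : Tendsto (fun p : ℝ => p - 1) (𝓝[>] 1) (𝓝 0) := by
    simpa using hid.sub_const 1
  have hq : Tendsto (fun p : ℝ => (p - 1) / p) (𝓝[>] 1) (𝓝 0) := by
    rw [← zero_div 1]
    exact hsub.div hid one_ne_zero
  have hcont : Tendsto (fun p : ℝ => (monDim A / (monDim A - p)) ^ ((p - 1) / p)) (𝓝[>] 1)
      (𝓝 1) := by
    have h2 : Tendsto (fun p : ℝ => monDim A / (monDim A - p)) (𝓝[>] 1)
      (𝓝 (monDim A / (monDim A - 1))) := tendsto_const_nhds.div (hid.const_sub _) (by linarith)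
    have h3 : monDim A / (monDim A - 1) ≠ 0 := (div_pos hD0 (by linarith)).ne'
    simpa using h2.rpow hq (Or.inl h3)
  have hself : Tendsto (fun p : ℝ => (p - 1) ^ ((p - 1) / p)) (𝓝[>] 1) (𝓝 1) := by
    have hlog : Tendsto (fun p : ℝ => log (p - 1) * (p - 1)) (𝓝[>] 1) (𝓝 0) := by
      have := (continuous_mul_log.tendsto 0).comp hsub
      rw [zero_mul] at this
      exact this.congr fun p => mul_comm _ _
    have h2 := (continuous_exp.tendsto _).comp (hlog.div hid one_ne_zero)
    rw [zero_div, exp_zero] at h2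
    refine h2.congr' ?_
    filter_upwards [h1] with p hp
    rw [rpow_def_of_pos (by linarith [hp.1])]
    simp [mul_div_assoc]
  have hG {s : ℝ} (hs : 0 < s) : ContinuousAt Gamma s :=
    (differentiableOn_Gamma_Ioi.differentiableAt (Ioi_mem_nhds hs)).continuousAt
  have hGD := Gamma_pos_of_pos hD0
  have hmass : Tendsto (fun p => bubbleMass A p (p / (p - 1))) (𝓝[>] 1) (𝓝 (orthantBall A)) := by
    have h2 : Tendsto (fun p => Gamma (monDim A / p)) (𝓝[>] 1) (𝓝 (Gamma (monDim A))) := by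
      refine (hG hD0).tendsto.comp ?_
      simpa [Pi.div_def] using (tendsto_const_nhds (x := monDim A)).div hid one_ne_zero
    have h3 : Tendsto (fun p : ℝ => Gamma (1 + monDim A / (p / (p - 1)))) (𝓝[>] 1) (𝓝 1) := by
      have h4 : Tendsto (fun p : ℝ => 1 + monDim A / (p / (p - 1))) (𝓝[>] 1) (𝓝 1) := by
        have := (hq.const_mul (monDim A)).const_add 1
        simp only [mul_zero, add_zero] at this
        refine this.congr fun p => ?_
        rw [div_div_eq_mul_div, mul_div_assoc]
      have h5 := (hG one_pos).tendsto.comp h4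
      rwa [Gamma_one] at h5
    have := ((h2.mul h3).div_const (Gamma (monDim A))).mul_const (orthantBall A)
    rwa [mul_one, div_self hGD.ne', one_mul] at this
  have hlim := ((hself.mul hcont).mul (hmass.rpow_const (p := -(1 / monDim A))
    (Or.inl (orthantBall_pos hA).ne'))).const_mul (monDim A)⁻¹
  rw [mul_one, one_mul] at hlim
  rw [monCp, if_pos rfl, monC1_eq hA]
  refine hlim.congr' ?_
  filter_upwards [h1] with p hp
  rw [monCp_eq hA hp.1 hp.2 rfl, mul_comm (monDim A) (p - 1), mul_div_assoc,
    ← mul_rpow (by linarith [hp.1]) (div_nonneg hD0.le (by linarith [hp.2])), one_div_div]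

lemma sobolev_one (hA : ∀ i, 0 ≤ A i) (hD : 1 < monDim A)
    {f : EuclideanSpace ℝ (Fin n) → ℝ} (hf : ContDiff ℝ 1 f) (hs : HasCompactSupport f) :
    (∫ x in monSet A, |f x| ^ (monDim A * 1 / (monDim A - 1)) * monWeight A x) ^
        ((monDim A - 1) / (monDim A * 1)) ≤
      monCp A 1 * (∫ x in monSet A, ‖fderiv ℝ f x‖ ^ (1 : ℝ) * monWeight A x) ^ (1 / (1 : ℝ)) := by
  have hD0 : 0 < monDim A := by linarith
  have hid : Tendsto (fun p : ℝ => p) (𝓝[>] 1) (𝓝 1) := tendsto_id.mono_left nhdsWithin_le_nhds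
  have hr : Tendsto (fun p => monDim A * p / (monDim A - p)) (𝓝[>] 1)
      (𝓝 (monDim A * 1 / (monDim A - 1))) :=
    (hid.const_mul _).div (hid.const_sub _) (by linarith)
  have he : Tendsto (fun p => (monDim A - p) / (monDim A * p)) (𝓝[>] 1)
      (𝓝 ((monDim A - 1) / (monDim A * 1))) :=
    (hid.const_sub _).div (hid.const_mul _) (by linarith)
  have hw := continuous_monWeight hA
  have hL := (tendsto_setIntegral_rpow_mul (μ := volume) (g := fun x => |f x|) hf.continuous.abs
    hs.norm (fun _ => abs_nonneg _) hw (monSet A) hr (div_pos (by linarith) (by linarith))).rpow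
    he (Or.inr (div_pos (by linarith) (by linarith)))
  have hR := (tendsto_setIntegral_rpow_mul (μ := volume)
    (hf.continuous_fderiv one_ne_zero).norm (hs.fderiv (𝕜 := ℝ)).norm (fun _ => norm_nonneg _)
    hw (monSet A) hid one_pos).rpow ((tendsto_const_nhds (x := (1 : ℝ))).div hid one_ne_zero)
    (Or.inr (by norm_num))
  refine le_of_tendsto_of_tendsto hL ((tendsto_monCp hA hD).mul hR) ?_
  filter_upwards [Ioo_mem_nhdsGT hD] with p hp
  exact sobolev_of_one_lt hA hp.1 hp.2 hf hs

end Euclidean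

end

/-- the sharp Sobolev inequality with monomial weights. -/
theorem sobolev_monomial_weight {n : ℕ} (A : Fin n → ℝ) (hA : ∀ i, 0 ≤ A i)
    (p : ℝ) (hp1 : 1 ≤ p) (hpD : p < monDim A)
    (f : EuclideanSpace ℝ (Fin n) → ℝ) (hf : ContDiff ℝ 1 f) (hsupp : HasCompactSupport f) :
    (∫ x in monSet A, |f x| ^ (monDim A * p / (monDim A - p)) * monWeight A x) ^
        ((monDim A - p) / (monDim A * p)) ≤
      monCp A p * (∫ x in monSet A, ‖fderiv ℝ f x‖ ^ p * monWeight A x) ^ (1 / p) := by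
  obtain rfl | hp := hp1.eq_or_lt
  · exact sobolev_one hA hpD hf hsupp
  · exact sobolev_of_one_lt hA hp hpD hf hsupp
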